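/- arXiv:1407.6149 — 6 statements merged into one kernel-verified Lean document; each statement's English description precedes it below -/
import Mathlib

section
/- Let q be an odd prime power, n ≥ 2 an integer, M an invertible symmetric (2n+1)×(2n+1) matrix over F_q, and S an antisymmetric (2n+1)×(2n+1) matrix over F_q. Let p ∈ F_q^{2n+1} be nonzero with pᵀMp = 0, and suppose S·p is NOT a scalar multiple of M·p. Let τ(p) be the number of 2-dimensional subspaces of F_q^{2n+1} containing p that are totally singular for M and totally isotropic for S. Then: (i) τ(p) is one of the three values (q^{n-1}−1)(q^{n-2}+1)/(q−1), (q^{2n-3}−1)/(q−1), (q^{n-1}+1)(q^{n-2}−1)/(q−1); and (ii) τ(p) = (q^{2n-3}−1)/(q−1) if and only if pᵀSM⁻¹Sp = 0. -/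
open Matrix

/-!
Put `w = M⁻¹ S p` and write `(u, v) = uᵀ M v`. Then `pᵀ S v = -(w, v)`, so the planes to be counted
are the `⟨p, v⟩` with `v` a singular vector, off the line `⟨p⟩`, of the space
`U = ⟨p, w⟩^⊥`. The hypothesis on `S p` makes `p, w` independent, so `dim U = 2 n - 1`; moreover
`(p, p) = (p, w) = 0`, so `p ∈ U`. If `N` is the number of singular vectors of `U`, double counting
gives `N = q + τ (q² - q)` (`card_eq_card_planes`).

The radical of the form on `U` is `U ∩ ⟨p, w⟩`, which is `⟨p, w⟩` when `(w, w) = 0` and `⟨p⟩`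
otherwise; and `(w, w) = -pᵀ S M⁻¹ S p`. So the rank is `2 n - 3` or `2 n - 2` respectively.
The number of zeros of a quadratic form of rank `r` with radical of dimension `k` satisfies
`q N = q ^ (k + r)` for `r` odd and `q N = q ^ (k + r) ± (q - 1) q ^ (k + m)` for `r = 2 m`
(`card_zeros_quadraticForm`, by diagonalisation and Gauss sums). The first case yields the middle
value of `τ`, the second case the two outer ones, which differ from it.
-/

/-! ### Zeros of quadratic forms over a finite field -/

/-- The quadratic Gauss sum `∑ ψ (a x²)`: a fibre of squaring over `y` has `χ y + 1` elements,
so for `a ≠ 0` the sum is a twist of the Gauss sum of the quadratic character `χ`. -/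
lemma sum_addChar_mul_sq {F : Type*} [Field F] [Fintype F] [DecidableEq F] (hF : ringChar F ≠ 2)
    {ψ : AddChar F ℂ} (hψ : ψ.IsPrimitive) (a : F) :
    ∑ x : F, ψ (a * x ^ 2) = if a = 0 then (Fintype.card F : ℂ) else
      (quadraticChar F a : ℂ) *
        gaussSum ((quadraticChar F).ringHomComp (Int.castRingHom ℂ)) ψ := by
  split_ifs with ha
  · simp [ha]
  set χ := (quadraticChar F).ringHomComp (Int.castRingHom ℂ) with hχ
  have h1 : ∑ x : F, ψ (a * x ^ 2) = ∑ y : F, (χ y + 1) * ψ (a * y) := by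
    rw [← Finset.sum_fiberwise (s := Finset.univ) (g := fun x : F => x ^ 2)]
    refine Finset.sum_congr rfl fun y _ => ?_
    have hc := quadraticChar_card_sqrts hF y
    have : χ y + 1 = ((Finset.univ.filter fun x : F => x ^ 2 = y).card : ℂ) := by
      have h2 : ((Finset.univ.filter fun x : F => x ^ 2 = y).card : ℤ) = quadraticChar F y + 1 := by
        rw [← hc]; congr 2; ext; simp
      have := congrArg (Int.cast : ℤ → ℂ) h2
      push_cast at this
      rw [this]; simp [hχ]
    rw [this, ← nsmul_eq_mul, ← Finset.sum_const]
    refine Finset.sum_congr rfl fun x hx => ?_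
    rw [(Finset.mem_filter.1 hx).2]
  have h2 : ∑ y : F, ψ (a * y) = 0 := by
    have := AddChar.sum_mulShift a hψ
    rw [if_neg ha] at this
    simpa [mul_comm] using this
  have h3 : ∑ y : F, χ y * ψ (a * y) = gaussSum χ (ψ.mulShift a) := rfl
  simp_rw [h1, add_mul, one_mul, Finset.sum_add_distrib, h2, add_zero, h3]
  have h4 := gaussSum_mulShift χ ψ (Units.mk0 a ha)
  have h5 : χ a * χ a = 1 := by
    simp only [hχ, MulChar.ringHomComp_apply, eq_intCast]
    rw [← Int.cast_mul, ← sq, quadraticChar_sq_one ha, Int.cast_one]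
  rw [← h4]
  simp only [Units.val_mk0]
  have h6 : ((quadraticChar F a : ℤ) : ℂ) = χ a := by simp [hχ]
  rw [h6, ← mul_assoc, h5, one_mul]

/-- Number of zeros of a diagonal form with `k` zero and `r` nonzero coefficients, times `q`.
By orthogonality of characters it is `∑ t, ∑ v, ψ (t Q v)`; the term `t = 0` gives `q ^ (k + r)`,
and the terms `t ≠ 0` factor into one-variable Gauss sums. Their `t`-dependence is `χ t ^ r`, so
they cancel for `r` odd and are all equal for `r` even. -/
lemma card_zeros_diagonal {F : Type*} [Field F] [Fintype F] [DecidableEq F]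
    (hF : ringChar F ≠ 2) {ι : Type*} [Fintype ι] [DecidableEq ι] (w : ι → F) (k r : ℕ)
    (hk : (Finset.univ.filter fun i => w i = 0).card = k)
    (hr : (Finset.univ.filter fun i => ¬ w i = 0).card = r) :
    (Odd r → (Fintype.card F : ℤ) * Nat.card {v : ι → F // ∑ i, w i * v i ^ 2 = 0} =
      (Fintype.card F : ℤ) ^ (k + r)) ∧
    (∀ m, r = 2 * m → ∃ ε : ℤ, (ε = 1 ∨ ε = -1) ∧
      (Fintype.card F : ℤ) * Nat.card {v : ι → F // ∑ i, w i * v i ^ 2 = 0} =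
      (Fintype.card F : ℤ) ^ (k + r) +
        ε * ((Fintype.card F : ℤ) - 1) * (Fintype.card F : ℤ) ^ (k + m)) := by
  obtain ⟨ψ, hψ⟩ : ∃ ψ : AddChar F ℂ, ψ.IsPrimitive :=
    ⟨_, AddChar.FiniteField.primitiveChar_to_Complex_isPrimitive F⟩
  set χ := (quadraticChar F).ringHomComp (Int.castRingHom ℂ) with hχ
  set q := Fintype.card F with hq
  set g := gaussSum χ ψ with hg
  have hg2 : g ^ 2 = χ (-1) * q := by
    refine gaussSum_sq ?_ ((quadraticChar_isQuadratic F).comp _) hψ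
    exact (MulChar.ringHomComp_ne_one_iff (RingHom.injective_int _)).2 (quadraticChar_ne_one hF)
  set c : ℤ := ∏ i ∈ Finset.univ.filter (fun i => ¬ w i = 0), quadraticChar F (w i) with hc
  have hcpm : c = 1 ∨ c = -1 := by
    rw [← sq_eq_one_iff, hc, ← Finset.prod_pow]
    exact Finset.prod_eq_one fun i hi => quadraticChar_sq_one (Finset.mem_filter.1 hi).2
  have hcardι : Fintype.card ι = k + r := by
    rw [← hk, ← hr, Finset.card_filter_add_card_filter_not, Finset.card_univ]
  have key : ∀ t : F, ∑ v : ι → F, ψ (t * ∑ i, w i * v i ^ 2) =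
      ∏ i, ∑ x : F, ψ ((t * w i) * x ^ 2) := by
    intro t
    rw [Finset.prod_univ_sum, Fintype.piFinset_univ]
    refine Finset.sum_congr rfl fun v _ => ?_
    rw [Finset.mul_sum]
    refine (map_prod ψ.toMonoidHom (fun i => Multiplicative.ofAdd (t * (w i * v i ^ 2)))
      Finset.univ).trans (Finset.prod_congr rfl fun i _ => ?_)
    rw [mul_assoc]
    rfl
  have key2 : ∀ t : F, t ≠ 0 → ∑ v : ι → F, ψ (t * ∑ i, w i * v i ^ 2) =
      (q : ℂ) ^ k * ((quadraticChar F t : ℂ) ^ r * c * g ^ r) := by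
    intro t ht
    rw [key, ← Finset.prod_filter_mul_prod_filter_not Finset.univ (fun i => w i = 0)]
    congr 1
    · rw [← hk, ← Finset.prod_const]
      refine Finset.prod_congr rfl fun i hi => ?_
      rw [sum_addChar_mul_sq hF hψ, if_pos (by simp [(Finset.mem_filter.1 hi).2])]
    · rw [← hr, ← Finset.prod_const, ← Finset.prod_const, hc, Int.cast_prod,
        ← Finset.prod_mul_distrib, ← Finset.prod_mul_distrib]
      refine Finset.prod_congr rfl fun i hi => ?_
      rw [sum_addChar_mul_sq hF hψ, if_neg (mul_ne_zero ht (Finset.mem_filter.1 hi).2), map_mul,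
        Int.cast_mul]
  have hN : (q : ℂ) * Nat.card {v : ι → F // ∑ i, w i * v i ^ 2 = 0} =
      ∑ t : F, ∑ v : ι → F, ψ (t * ∑ i, w i * v i ^ 2) := by
    rw [Finset.sum_comm]
    simp_rw [AddChar.sum_mulShift _ hψ]
    push_cast
    rw [Nat.card_eq_fintype_card, Fintype.card_subtype, Finset.sum_ite]
    simp [mul_comm, hq]
  have hsplit : (q : ℂ) * Nat.card {v : ι → F // ∑ i, w i * v i ^ 2 = 0} =
      (q : ℂ) ^ (k + r) + ∑ t ∈ Finset.univ.erase (0 : F),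
        (q : ℂ) ^ k * ((quadraticChar F t : ℂ) ^ r * c * g ^ r) := by
    rw [hN, ← Finset.add_sum_erase _ _ (Finset.mem_univ (0 : F))]
    congr 1
    · simp [hcardι, hq]
    · exact Finset.sum_congr rfl fun t ht => key2 t (Finset.ne_of_mem_erase ht)
  constructor
  · intro hodd
    have h0 : ∑ t ∈ Finset.univ.erase (0 : F),
        (q : ℂ) ^ k * ((quadraticChar F t : ℂ) ^ r * c * g ^ r) = 0 := by
      rw [← Finset.mul_sum, ← Finset.sum_mul, ← Finset.sum_mul]
      have : ∑ t ∈ Finset.univ.erase (0 : F), (quadraticChar F t : ℂ) ^ r = 0 := by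
        have hs := congrArg (Int.cast : ℤ → ℂ) (quadraticChar_sum_zero hF)
        rw [← Finset.add_sum_erase _ _ (Finset.mem_univ (0 : F))] at hs
        simp only [MulChar.map_zero, zero_add, Int.cast_sum, Int.cast_zero] at hs
        rw [← hs]
        refine Finset.sum_congr rfl fun t ht => ?_
        rcases quadraticChar_dichotomy (Finset.ne_of_mem_erase ht) with h | h <;>
          simp [h, hodd.neg_one_pow]
      rw [this]; ring
    rw [h0, add_zero] at hsplit
    exact_mod_cast hsplit
  · intro m hm
    refine ⟨c * quadraticChar F (-1) ^ m, ?_, ?_⟩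
    · rw [← sq_eq_one_iff, mul_pow, ← pow_mul, mul_comm m, pow_mul,
        quadraticChar_sq_one (neg_ne_zero.2 one_ne_zero), one_pow, mul_one, sq_eq_one_iff]
      exact hcpm
    · have h0 : ∑ t ∈ Finset.univ.erase (0 : F),
          (q : ℂ) ^ k * ((quadraticChar F t : ℂ) ^ r * c * g ^ r) =
          ((q : ℂ) - 1) * ((q : ℂ) ^ k * (c * ((quadraticChar F (-1) : ℂ) * q) ^ m)) := by
        have : ∀ t ∈ Finset.univ.erase (0 : F),
          (q : ℂ) ^ k * ((quadraticChar F t : ℂ) ^ r * c * g ^ r) =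
            (q : ℂ) ^ k * (c * ((quadraticChar F (-1) : ℂ) * q) ^ m) := by
          intro t ht
          have h1 : (quadraticChar F t : ℂ) ^ 2 = 1 := by
            exact_mod_cast quadraticChar_sq_one (Finset.ne_of_mem_erase ht)
          rw [hm, pow_mul, pow_mul, h1, hg2, one_pow, one_mul]
          simp [hχ]
        rw [Finset.sum_congr rfl this, Finset.sum_const, nsmul_eq_mul,
          Finset.card_erase_of_mem (Finset.mem_univ _), Finset.card_univ,
          Nat.cast_sub Fintype.card_pos, Nat.cast_one]
      rw [h0] at hsplit
      have : (((q : ℤ) * Nat.card {v : ι → F // ∑ i, w i * v i ^ 2 = 0} : ℤ) : ℂ) =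
        (((q : ℤ) ^ (k + r) +
        c * quadraticChar F (-1) ^ m * ((q : ℤ) - 1) * (q : ℤ) ^ (k + m) : ℤ) : ℂ) := by
        push_cast
        rw [hsplit]; ring
      exact_mod_cast this

/-- Number of zeros of a quadratic form whose radical has dimension `k` (stated as a cardinality)
and whose rank is `r`, obtained by diagonalisation. -/
lemma card_zeros_quadraticForm {F : Type*} [Field F] [Fintype F]
    (hF : ringChar F ≠ 2) {V : Type*} [AddCommGroup V] [Module F V] [FiniteDimensional F V]
    (Q : QuadraticForm F V) (k r : ℕ) (hd : Module.finrank F V = k + r)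
    (hk : Nat.card {x : V // ∀ y, QuadraticMap.polar Q x y = 0} = Fintype.card F ^ k) :
    (Odd r → (Fintype.card F : ℤ) * Nat.card {v : V // Q v = 0} =
      (Fintype.card F : ℤ) ^ (k + r)) ∧
    (∀ m, r = 2 * m → ∃ ε : ℤ, (ε = 1 ∨ ε = -1) ∧
      (Fintype.card F : ℤ) * Nat.card {v : V // Q v = 0} =
      (Fintype.card F : ℤ) ^ (k + r) +
        ε * ((Fintype.card F : ℤ) - 1) * (Fintype.card F : ℤ) ^ (k + m)) := by
  classical
  have h2 : (2 : F) ≠ 0 := Ring.two_ne_zero hF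
  have : Invertible (2 : F) := invertibleOfNonzero h2
  obtain ⟨w, ⟨e⟩⟩ := QuadraticForm.equivalent_weightedSumSquares Q
  have hw : ∀ v, QuadraticMap.weightedSumSquares F w v = ∑ i, w i * v i ^ 2 := by
    intro v; simp [QuadraticMap.weightedSumSquares_apply, sq]
  have hcard : Nat.card {v : V // Q v = 0} =
      Nat.card {v : Fin (Module.finrank F V) → F // ∑ i, w i * v i ^ 2 = 0} := by
    refine Nat.card_congr (e.toLinearEquiv.toEquiv.subtypeEquiv fun v => ?_)
    rw [← hw, ← e.map_app v]; rfl
  have hrad : Nat.card {x : V // ∀ y, QuadraticMap.polar Q x y = 0} =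
      Nat.card {x : Fin (Module.finrank F V) → F // ∀ i, w i * x i = 0} := by
    refine Nat.card_congr (e.toLinearEquiv.toEquiv.subtypeEquiv fun v => ?_)
    have hpol : ∀ y, QuadraticMap.polar Q v y =
        QuadraticMap.polar (QuadraticMap.weightedSumSquares F w) (e v) (e y) := by
      intro y
      simp only [QuadraticMap.polar, ← map_add, e.map_app]
    have hpol2 : ∀ x y, QuadraticMap.polar (QuadraticMap.weightedSumSquares F w) x y =
        2 * ∑ i, (w i * x i) * y i := by
      intro x y
      simp only [QuadraticMap.polar, hw, Finset.mul_sum, ← Finset.sum_sub_distrib]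
      refine Finset.sum_congr rfl fun i _ => ?_
      simp only [Pi.add_apply]; ring
    constructor
    · intro h i
      have h1 := h (e.symm (Pi.single i 1))
      rw [hpol, hpol2] at h1
      have : e (e.symm (Pi.single i 1)) = Pi.single i 1 := e.apply_symm_apply _
      rw [this] at h1
      simpa [h2, Pi.single_apply] using h1
    · intro h y
      rw [hpol, hpol2]
      have h' : ∀ i, w i * e v i = 0 := h
      simp [h']
  have hz : Nat.card {x : Fin (Module.finrank F V) → F // ∀ i, w i * x i = 0} =
      Fintype.card F ^ (Finset.univ.filter fun i => w i = 0).card := by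
    have e2 : {x : Fin (Module.finrank F V) → F // ∀ i, w i * x i = 0} ≃
      (∀ i, {x : F // w i * x = 0}) :=
      Equiv.subtypePiEquivPi (p := fun i (x : F) => w i * x = 0)
    rw [Nat.card_congr e2, Nat.card_pi, ← Finset.prod_const, Finset.prod_filter]
    refine Finset.prod_congr rfl fun i _ => ?_
    split_ifs with h
    · simp [h]
    · simp [h]
  have hkk : (Finset.univ.filter fun i => w i = 0).card = k := by
    have := hk
    rw [hrad, hz] at this
    exact Nat.pow_right_injective (Fintype.one_lt_card) this
  have hrr : (Finset.univ.filter fun i => ¬ w i = 0).card = r := by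
    have := Finset.card_filter_add_card_filter_not (s := Finset.univ) (fun i => w i = 0)
    rw [Finset.card_univ, Fintype.card_fin, hkk] at this
    omega
  rw [hcard]
  exact card_zeros_diagonal hF w k r hkk hrr

/-! ### Planes through a point -/

lemma finrank_span_pair_eq_two {F V : Type*} [Field F] [AddCommGroup V] [Module F V]
    {p v : V} (hp : p ≠ 0) (hv : v ∉ Submodule.span F {p}) :
    Module.finrank F (Submodule.span F {p, v}) = 2 := by
  have hind : LinearIndependent F ![p, v] := by
    rw [LinearIndependent.pair_iff' hp]
    intro a ha
    exact hv (ha ▸ Submodule.smul_mem _ a (Submodule.mem_span_singleton_self p))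
  rw [← Matrix.range_cons_cons_empty p v ![], finrank_span_eq_card hind, Fintype.card_fin]

lemma span_pair_eq_of_mem {F V : Type*} [Field F] [AddCommGroup V] [Module F V]
    [FiniteDimensional F V] {p v : V} (hp : p ≠ 0) (hv : v ∉ Submodule.span F {p})
    {W : Submodule F V} (hW : Module.finrank F W = 2) (hpW : p ∈ W) (hvW : v ∈ W) :
    Submodule.span F {p, v} = W := by
  refine Submodule.eq_of_le_of_finrank_eq ?_ ((finrank_span_pair_eq_two hp hv).trans hW.symm)
  rw [Submodule.span_le]
  rintro x (rfl | rfl) <;> assumption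

/-- Double counting: if the planes `W ∋ p` satisfying `C` are those consisting of vectors
satisfying `G`, and `G` is inherited by `⟨p, v⟩` from `v`, then the vectors satisfying `G` outside
the line `⟨p⟩` are partitioned by these planes, each containing `q² - q` of them. -/
lemma card_eq_card_planes {F V : Type*} [Field F] [Fintype F] [AddCommGroup V] [Module F V]
    [FiniteDimensional F V] {p : V} (hp : p ≠ 0) (C : Submodule F V → Prop) (G : V → Prop)
    (hC : ∀ W : Submodule F V, p ∈ W → Module.finrank F W = 2 → (C W ↔ ∀ v ∈ W, G v))
    (hG : ∀ v, G v → ∀ x ∈ Submodule.span F {p, v}, G x)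
    (hGp : G p) :
    (Nat.card {v // G v} : ℤ) = Fintype.card F +
      Nat.card {W : Submodule F V // p ∈ W ∧ Module.finrank F W = 2 ∧ C W} *
        ((Fintype.card F : ℤ) ^ 2 - Fintype.card F) := by
  classical
  have : Finite V := Module.finite_of_finite F
  have : Fintype V := Fintype.ofFinite V
  set L := Submodule.span F {p} with hL
  have hcL : Nat.card L = Fintype.card F := by
    rw [Module.natCard_eq_pow_finrank (K := F), finrank_span_singleton hp, pow_one,
      Nat.card_eq_fintype_card]
  have hLG : ∀ x ∈ L, G x := fun x hx =>
    hG p hGp x (Submodule.span_mono (by simp) hx)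
  have e1 : {v // G v} ≃ L ⊕ {v // G v ∧ v ∉ L} :=
    (Equiv.sumCompl (fun v : {v // G v} => v.1 ∈ L)).symm.trans
      (Equiv.sumCongr
        ((Equiv.subtypeSubtypeEquivSubtypeInter G (fun v => v ∈ L)).trans
          (Equiv.subtypeEquivRight fun v => ⟨fun h => h.2, fun h => ⟨hLG v h, h⟩⟩))
        (Equiv.subtypeSubtypeEquivSubtypeInter G (fun v => v ∉ L)))
  let 𝒲 := {W : Submodule F V // p ∈ W ∧ Module.finrank F W = 2 ∧ C W}
  have hmem : ∀ v : V, p ∈ Submodule.span F {p, v} := fun v => Submodule.subset_span (by simp)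
  have hmem' : ∀ v : V, v ∈ Submodule.span F {p, v} := fun v => Submodule.subset_span (by simp)
  let f : {v // G v ∧ v ∉ L} → 𝒲 := fun v =>
    ⟨Submodule.span F {p, v.1}, hmem _, finrank_span_pair_eq_two hp v.2.2,
      (hC _ (hmem _) (finrank_span_pair_eq_two hp v.2.2)).2 (hG v.1 v.2.1)⟩
  have hfib : ∀ W : 𝒲, (Nat.card {v // f v = W} : ℤ) =
      (Fintype.card F : ℤ) ^ 2 - Fintype.card F := by
    rintro ⟨W, hpW, hW, hCW⟩
    have hLW : L ≤ W := by rw [hL, Submodule.span_le]; simpa using hpW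
    have e2 : {v // f v = ⟨W, hpW, hW, hCW⟩} ≃ {v : W // ¬ v.1 ∈ L} :=
      { toFun := fun v => ⟨⟨v.1.1, by
          have h : Submodule.span F {p, v.1.1} = W := congrArg Subtype.val v.2
          exact h.le (hmem' v.1.1)⟩, v.1.2.2⟩
        invFun := fun v => ⟨⟨v.1.1, (hC W hpW hW).1 hCW _ v.1.2, v.2⟩,
          Subtype.ext (span_pair_eq_of_mem hp v.2 hW hpW v.1.2)⟩
        left_inv := fun v => rfl
        right_inv := fun v => rfl }
    have e3 : W ≃ L ⊕ {v : W // ¬ v.1 ∈ L} :=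
      (Equiv.sumCompl (fun v : W => v.1 ∈ L)).symm.trans
        (Equiv.sumCongr
          ((Equiv.subtypeSubtypeEquivSubtypeInter (fun v => v ∈ W) (fun v => v ∈ L)).trans
            (Equiv.subtypeEquivRight fun v => ⟨fun h => h.2, fun h => ⟨hLW h, h⟩⟩))
          (Equiv.refl _))
    have h3 := Nat.card_congr e3
    rw [Nat.card_sum, hcL, Module.natCard_eq_pow_finrank (K := F), hW,
      Nat.card_eq_fintype_card] at h3
    rw [Nat.card_congr e2, eq_sub_iff_add_eq]
    zify at h3
    rw [h3]; ring
  have : Finite 𝒲 := Subtype.finite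
  have : Fintype 𝒲 := Fintype.ofFinite _
  have h4 : (Nat.card {v // G v ∧ v ∉ L} : ℤ) =
      Nat.card 𝒲 * ((Fintype.card F : ℤ) ^ 2 - Fintype.card F) := by
    rw [Nat.card_congr (Equiv.sigmaFiberEquiv f).symm, Nat.card_sigma]
    push_cast
    simp_rw [hfib]
    rw [Finset.sum_const, Finset.card_univ, nsmul_eq_mul, Nat.card_eq_fintype_card]
  rw [Nat.card_congr e1, Nat.card_sum, hcL]
  push_cast
  rw [h4]

/-! ### The count of totally singular, totally isotropic planes -/

/-- If `p ≠ 0` is singular for `M` and `S·p` is not a scalar multiple of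
`M·p`, then the number `τ(p)` of 2-dimensional subspaces through `p` totally singular
for `M` and totally isotropic for `S` takes one of the three values
`(q^{n-1}−1)(q^{n-2}+1)/(q−1)`, `(q^{2n-3}−1)/(q−1)`, `(q^{n-1}+1)(q^{n-2}−1)/(q−1)`,
and the middle one occurs exactly when `pᵀSM⁻¹Sp = 0`
(everything stated multiplied through by `q − 1`). -/
theorem stmt_13 (q : ℕ) (F : Type) [Field F] [Fintype F]
    (hcard : Fintype.card F = q) (hodd : Odd q)
    (n : ℕ) (hn : 2 ≤ n)
    (M : Matrix (Fin (2 * n + 1)) (Fin (2 * n + 1)) F)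
    (hMsymm : M.IsSymm) (hMinv : IsUnit M)
    (S : Matrix (Fin (2 * n + 1)) (Fin (2 * n + 1)) F)
    (hSanti : Sᵀ = -S)
    (p : Fin (2 * n + 1) → F) (hp : p ≠ 0) (hpsing : p ⬝ᵥ M.mulVec p = 0)
    (hplam : ∀ lam : F, S.mulVec p ≠ lam • M.mulVec p) :
    ((Nat.card {W : Submodule F (Fin (2 * n + 1) → F) //
        p ∈ W ∧ Module.finrank F W = 2 ∧
        (∀ v ∈ W, v ⬝ᵥ M.mulVec v = 0) ∧
        (∀ u ∈ W, ∀ v ∈ W, u ⬝ᵥ S.mulVec v = 0)} : ℤ) * ((q : ℤ) - 1) =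
          ((q : ℤ) ^ (n - 1) - 1) * ((q : ℤ) ^ (n - 2) + 1) ∨
     (Nat.card {W : Submodule F (Fin (2 * n + 1) → F) //
        p ∈ W ∧ Module.finrank F W = 2 ∧
        (∀ v ∈ W, v ⬝ᵥ M.mulVec v = 0) ∧
        (∀ u ∈ W, ∀ v ∈ W, u ⬝ᵥ S.mulVec v = 0)} : ℤ) * ((q : ℤ) - 1) =
          (q : ℤ) ^ (2 * n - 3) - 1 ∨
     (Nat.card {W : Submodule F (Fin (2 * n + 1) → F) //
        p ∈ W ∧ Module.finrank F W = 2 ∧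
        (∀ v ∈ W, v ⬝ᵥ M.mulVec v = 0) ∧
        (∀ u ∈ W, ∀ v ∈ W, u ⬝ᵥ S.mulVec v = 0)} : ℤ) * ((q : ℤ) - 1) =
          ((q : ℤ) ^ (n - 1) + 1) * ((q : ℤ) ^ (n - 2) - 1)) ∧
    ((Nat.card {W : Submodule F (Fin (2 * n + 1) → F) //
        p ∈ W ∧ Module.finrank F W = 2 ∧
        (∀ v ∈ W, v ⬝ᵥ M.mulVec v = 0) ∧
        (∀ u ∈ W, ∀ v ∈ W, u ⬝ᵥ S.mulVec v = 0)} : ℤ) * ((q : ℤ) - 1) =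
          (q : ℤ) ^ (2 * n - 3) - 1 ↔
      p ⬝ᵥ (S * M⁻¹ * S).mulVec p = 0) := by
  have hF : ringChar F ≠ 2 := by
    intro h
    have := FiniteField.even_card_iff_char_two.1 h
    rw [hcard] at this
    exact (Nat.not_even_iff_odd.2 hodd) (Nat.even_iff.2 this)
  have h2 : (2 : F) ≠ 0 := Ring.two_ne_zero hF
  have hMc : ∀ u v, u ⬝ᵥ M *ᵥ v = v ⬝ᵥ M *ᵥ u := by
    intro u v
    rw [dotProduct_mulVec, ← mulVec_transpose, hMsymm.eq, dotProduct_comm]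
  have hSc : ∀ u v, u ⬝ᵥ S *ᵥ v = - (v ⬝ᵥ S *ᵥ u) := by
    intro u v
    rw [dotProduct_mulVec, ← mulVec_transpose, hSanti, neg_mulVec, neg_dotProduct,
      dotProduct_comm]
  have hSs : ∀ u, u ⬝ᵥ S *ᵥ u = 0 := by
    intro u
    have h := hSc u u
    have : 2 * (u ⬝ᵥ S *ᵥ u) = 0 := by linear_combination h
    simpa [h2] using this
  have hdet : IsUnit M.det := (Matrix.isUnit_iff_isUnit_det M).1 hMinv
  have hMinj : ∀ v, M *ᵥ v = 0 → v = 0 := by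
    intro v hv
    have := congrArg (M⁻¹ *ᵥ ·) hv
    simpa [mulVec_mulVec, Matrix.nonsing_inv_mul M hdet] using this
  set w := M⁻¹ *ᵥ (S *ᵥ p) with hw
  have hMw : M *ᵥ w = S *ᵥ p := by
    rw [hw, mulVec_mulVec, Matrix.mul_nonsing_inv M hdet, one_mulVec]
  have hww : p ⬝ᵥ (S * M⁻¹ * S) *ᵥ p = - (w ⬝ᵥ M *ᵥ w) := by
    rw [← mulVec_mulVec, ← mulVec_mulVec, ← hw, hSc, hMw]
  have hpw : p ⬝ᵥ M *ᵥ w = 0 := by rw [hMw, hSs]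
  have hwp : w ∉ Submodule.span F {p} := by
    rw [Submodule.mem_span_singleton]
    rintro ⟨a, ha⟩
    apply hplam a
    rw [← hMw, ← ha, mulVec_smul]
  -- `U` below is the orthogonal complement of `⟨p, w⟩`, realised as a dual coannihilator so that
  -- its dimension and its double orthogonal come from duality.
  let D := dotProductEquiv F (Fin (2 * n + 1))
  have hD : ∀ u v, D u v = u ⬝ᵥ v := fun u v => rfl
  let Φ : Submodule F (Module.Dual F (Fin (2 * n + 1) → F)) :=
    Submodule.span F {D (M *ᵥ p), D (M *ᵥ w)}
  let E : (Fin (2 * n + 1) → F) →ₗ[F] Module.Dual F (Fin (2 * n + 1) → F) :=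
    D.toLinearMap ∘ₗ M.mulVecLin
  have hE : ∀ u v, E u v = u ⬝ᵥ M *ᵥ v := by
    intro u v
    change (M *ᵥ u) ⬝ᵥ v = _
    rw [hMc, dotProduct_comm]
  have hEinj : Function.Injective E := by
    rw [← LinearMap.ker_eq_bot, LinearMap.ker_eq_bot']
    intro v hv
    exact hMinj v (D.map_eq_zero_iff.1 hv)
  have hΦ : Φ = (Submodule.span F {p, w}).map E := by
    rw [Submodule.map_span, Set.image_pair]; rfl
  have hΦdim : Module.finrank F Φ = 2 := by
    rw [hΦ, ← (Submodule.equivMapOfInjective E hEinj _).finrank_eq, finrank_span_pair_eq_two hp hwp]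
  set U := Φ.dualCoannihilator with hU
  have hUmem : ∀ v, v ∈ U ↔ p ⬝ᵥ M *ᵥ v = 0 ∧ w ⬝ᵥ M *ᵥ v = 0 := by
    intro v
    rw [hU, hΦ, Submodule.mem_dualCoannihilator, ← hE, ← hE]
    constructor
    · intro h
      exact ⟨h _ (Submodule.mem_map_of_mem (Submodule.subset_span (by simp))),
        h _ (Submodule.mem_map_of_mem (Submodule.subset_span (by simp)))⟩
    · rintro ⟨h1, h3⟩ φ ⟨x, hx, rfl⟩
      obtain ⟨a, b, rfl⟩ := Submodule.mem_span_pair.1 hx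
      simp [h1, h3]
  have hUdim : Module.finrank F U = 2 * n - 1 := by
    have := Subspace.finrank_add_finrank_dualCoannihilator_eq Φ
    rw [hΦdim, Module.finrank_fin_fun, ← hU] at this
    omega
  have hUperp : ∀ v, (∀ u ∈ U, v ⬝ᵥ M *ᵥ u = 0) ↔ v ∈ Submodule.span F {p, w} := by
    intro v
    have h1 : U.dualAnnihilator = Φ := Subspace.dualCoannihilator_dualAnnihilator_eq
    have h3 : (∀ u ∈ U, v ⬝ᵥ M *ᵥ u = 0) ↔ E v ∈ U.dualAnnihilator := by
      rw [Submodule.mem_dualAnnihilator]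
      simp only [hE]
    rw [h3, h1, hΦ, Submodule.mem_map]
    constructor
    · rintro ⟨x, hx, hxv⟩
      rwa [← hEinj hxv]
    · exact fun h => ⟨v, h, rfl⟩
  have hpU : p ∈ U := (hUmem p).2 ⟨hpsing, by rw [hMc, hpw]⟩
  have hpS : ∀ v, p ⬝ᵥ S *ᵥ v = -(w ⬝ᵥ M *ᵥ v) := by
    intro v
    rw [hSc, hMc, hMw]
  let Q : QuadraticForm F U := (Matrix.toQuadraticForm' M).comp U.subtype
  have hQ : ∀ v : U, Q v = v.1 ⬝ᵥ M *ᵥ v.1 := by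
    intro v
    simp [Q, Matrix.toQuadraticForm', LinearMap.BilinMap.toQuadraticMap_apply,
      Matrix.toLinearMap₂'_apply']
  have hpol : ∀ x y : U, QuadraticMap.polar Q x y = 2 * (x.1 ⬝ᵥ M *ᵥ y.1) := by
    intro x y
    simp only [QuadraticMap.polar, hQ, Submodule.coe_add, mulVec_add, add_dotProduct,
      dotProduct_add]
    rw [hMc y.1 x.1]; ring
  have hrad : Nat.card {x : U // ∀ y, QuadraticMap.polar Q x y = 0} =
      Nat.card (U ⊓ Submodule.span F {p, w} : Submodule F (Fin (2 * n + 1) → F)) := by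
    refine Nat.card_congr ((Equiv.subtypeEquivRight ?_).trans
      (Equiv.subtypeSubtypeEquivSubtypeInter (fun v => v ∈ U)
        (fun v => v ∈ Submodule.span F {p, w})))
    intro x
    rw [← hUperp]
    simp [hpol, h2]
  -- A plane through `p` is totally singular and totally isotropic iff it consists of singular
  -- vectors of `U`: it is spanned by `p` and any `u` off `⟨p⟩`, and `u S u = 0`.
  have hcount := card_eq_card_planes hp
    (fun W : Submodule F (Fin (2 * n + 1) → F) => (∀ v ∈ W, v ⬝ᵥ M.mulVec v = 0) ∧
      (∀ u ∈ W, ∀ v ∈ W, u ⬝ᵥ S.mulVec v = 0))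
    (fun v => v ∈ U ∧ v ⬝ᵥ M *ᵥ v = 0)
    (by
      intro W hpW hW
      constructor
      · rintro ⟨h1, h3⟩ v hv
        refine ⟨(hUmem v).2 ⟨?_, ?_⟩, h1 v hv⟩
        · have h4 := h1 (p + v) (W.add_mem hpW hv)
          simp only [mulVec_add, add_dotProduct, dotProduct_add] at h4
          rw [hpsing, h1 v hv, hMc v p] at h4
          have : 2 * (p ⬝ᵥ M *ᵥ v) = 0 := by linear_combination h4
          simpa [h2] using this
        · have := h3 p hpW v hv
          rw [hpS] at this
          simpa using this
      · intro h
        have hpv : ∀ v ∈ W, p ⬝ᵥ S *ᵥ v = 0 := by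
          intro v hv
          rw [hpS, ((hUmem v).1 (h v hv).1).2, neg_zero]
        refine ⟨fun v hv => (h v hv).2, fun u hu v hv => ?_⟩
        by_cases hup : u ∈ Submodule.span F {p}
        · obtain ⟨a, rfl⟩ := Submodule.mem_span_singleton.1 hup
          rw [smul_dotProduct, hpv v hv, smul_zero]
        · rw [← span_pair_eq_of_mem hp hup hW hpW hu] at hv
          obtain ⟨a, b, rfl⟩ := Submodule.mem_span_pair.1 hv
          simp [mulVec_add, mulVec_smul, dotProduct_add, hSs, hSc u p, hpv u hu])
    (by
      rintro v ⟨hvU, hv⟩ x hx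
      obtain ⟨a, b, rfl⟩ := Submodule.mem_span_pair.1 hx
      refine ⟨U.add_mem (U.smul_mem _ hpU) (U.smul_mem _ hvU), ?_⟩
      simp [mulVec_add, mulVec_smul, dotProduct_add, add_dotProduct, hpsing, hv, hMc v p,
        ((hUmem v).1 hvU).1])
    ⟨hpU, hpsing⟩
  have hN : Nat.card {v // v ∈ U ∧ v ⬝ᵥ M *ᵥ v = 0} = Nat.card {v : U // Q v = 0} := by
    refine Nat.card_congr ((Equiv.subtypeSubtypeEquivSubtypeInter (fun v => v ∈ U)
        (fun v => v ⬝ᵥ M *ᵥ v = 0)).symm.trans (Equiv.subtypeEquivRight ?_))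
    intro x
    rw [hQ]
  rw [hN, hcard] at hcount
  have hq1 : (1 : ℤ) < q := by
    rw [← hcard]; exact_mod_cast Fintype.one_lt_card
  generalize Nat.card {W : Submodule F (Fin (2 * n + 1) → F) //
        p ∈ W ∧ Module.finrank F W = 2 ∧
        (∀ v ∈ W, v ⬝ᵥ M.mulVec v = 0) ∧
        (∀ u ∈ W, ∀ v ∈ W, u ⬝ᵥ S.mulVec v = 0)} = τ at hcount ⊢
  obtain ⟨m, rfl⟩ : ∃ m, n = m + 2 := ⟨n - 2, by omega⟩
  have hq0 : (q : ℤ) ≠ 0 := by linarith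
  have hqm : (q : ℤ) ^ m ≠ 0 := pow_ne_zero _ hq0
  have e1 : m + 2 - 1 = m + 1 := by omega
  have e2 : m + 2 - 2 = m := by omega
  have e3 : 2 * (m + 2) - 3 = 2 * m + 1 := by omega
  rw [e1, e2, e3, hww, neg_eq_zero]
  have hwU : w ∈ U ↔ w ⬝ᵥ M *ᵥ w = 0 := by simp [hUmem, hpw]
  by_cases h0 : w ⬝ᵥ M *ᵥ w = 0
  -- `w` singular: radical of dimension `2`, odd rank `2 n - 3`
  · have hinf : U ⊓ Submodule.span F {p, w} = Submodule.span F {p, w} := by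
      rw [inf_eq_right, Submodule.span_le]
      rintro x (rfl | rfl)
      exacts [hpU, hwU.2 h0]
    have hz := (card_zeros_quadraticForm hF Q 2 (2 * m + 1) (by rw [hUdim]; omega) (by
      rw [hrad, hinf, Module.natCard_eq_pow_finrank (K := F), finrank_span_pair_eq_two hp hwp,
        Nat.card_eq_fintype_card])).1 ⟨m, rfl⟩
    rw [hcard, hcount] at hz
    have hτ : (τ : ℤ) * ((q : ℤ) - 1) = (q : ℤ) ^ (2 * m + 1) - 1 := by
      apply mul_left_cancel₀ (pow_ne_zero 2 hq0)
      linear_combination hz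
    exact ⟨Or.inr (Or.inl hτ), fun _ => h0, fun _ => hτ⟩
  -- `w` nonsingular: radical `⟨p⟩`, even rank `2 n - 2`
  · have hinf : U ⊓ Submodule.span F {p, w} = Submodule.span F {p} := by
      apply le_antisymm
      · rintro x ⟨hxU, hx⟩
        obtain ⟨a, b, rfl⟩ := Submodule.mem_span_pair.1 hx
        have h1 := ((hUmem _).1 hxU).2
        have hb : b = 0 := by
          simpa [mulVec_add, mulVec_smul, dotProduct_add, hMc w p, hpw, h0] using h1
        rw [hb, zero_smul, add_zero]
        exact Submodule.smul_mem _ a (Submodule.mem_span_singleton_self p)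
      · rw [Submodule.span_le, Set.singleton_subset_iff]
        exact ⟨hpU, (Submodule.subset_span (by simp) : p ∈ Submodule.span F {p, w})⟩
    obtain ⟨ε, hε, hz⟩ := (card_zeros_quadraticForm hF Q 1 (2 * (m + 1))
      (by rw [hUdim]; omega) (by
      rw [hrad, hinf, Module.natCard_eq_pow_finrank (K := F), finrank_span_singleton hp,
        Nat.card_eq_fintype_card])).2 (m + 1) rfl
    rw [hcard, hcount] at hz
    have hτ : (τ : ℤ) * ((q : ℤ) - 1) =
        (q : ℤ) ^ (2 * m + 1) - 1 + ε * ((q : ℤ) - 1) * (q : ℤ) ^ m := by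
      apply mul_left_cancel₀ (pow_ne_zero 2 hq0)
      linear_combination hz
    have hε0 : ε ≠ 0 := by rcases hε with rfl | rfl <;> norm_num
    refine ⟨?_, fun h => ?_, fun h => absurd h h0⟩
    · rcases hε with rfl | rfl
      · left; rw [hτ]; ring
      · right; right; rw [hτ]; ring
    · rw [hτ, add_eq_left] at h
      exact absurd h (mul_ne_zero (mul_ne_zero hε0 (by linarith)) hqm)
end

section
/- Let q be an odd prime power and t ≥ 1 an integer. Then the number of triples (z, u, w) ∈ F_q × F_q^t × F_q^t such that z ≠ 0 and z² − 2·(u₁w₁ + ⋯ + u_t w_t) is a nonzero square in F_q equals (q−1)·(q^{2t} − q^{2t-1} + q^t + q^{t-1})/2. -/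
open Matrix

/-!
Fix `z ≠ 0` and `u`, and count the `w` with `z² − 2 u·w` a nonzero square. If `u = 0`, all `q^t`
vectors qualify because `z²` is a nonzero square. If `u ≠ 0`, the functional `w ↦ u·w` is
equidistributed on `F` (`card_mul_sum_dotProduct`), and exactly half of the nonzero elements of `F`
are squares (`sum_twoInd`), so there are `q^(t-1) (q-1)/2` such `w`. Summing over the `q^t - 1`
nonzero `u` and the `q - 1` values of `z` gives the formula.
-/

/-- Twice the indicator function of the nonzero squares of `F`. -/
noncomputable def twoInd {F : Type} [Field F] (x : F) : ℤ :=
  open Classical in if x ≠ 0 ∧ ∃ b : F, x = b ^ 2 then 2 else 0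

/-- There are `(q - 1) / 2` nonzero squares: `twoInd` equals `χ + 1 - [x = 0]` for the quadratic
character `χ`, whose values sum to zero. -/
lemma sum_twoInd {F : Type} [Field F] [Fintype F] (h2 : ringChar F ≠ 2) :
    ∑ x : F, twoInd x = (Fintype.card F : ℤ) - 1 := by
  classical
  have key : ∀ x : F, twoInd x = quadraticChar F x + 1 - if x = 0 then 1 else 0 := by
    intro x
    by_cases hx : x = 0
    · simp [twoInd, hx]
    · by_cases hs : IsSquare x
      · have h1 := (quadraticChar_one_iff_isSquare hx).2 hs
        have hb := (isSquare_iff_exists_sq x).1 hs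
        simp [twoInd, hx, h1, hb]
      · have h1 := quadraticChar_neg_one_iff_not_isSquare.2 hs
        have hb : ¬ ∃ b : F, x = b ^ 2 := fun h => hs ((isSquare_iff_exists_sq x).2 h)
        simp only [twoInd, hx, h1, hb]
        simp
  simp only [key, Finset.sum_sub_distrib, Finset.sum_add_distrib, quadraticChar_sum_zero h2]
  simp

/-- Equidistribution of `w ↦ u·w` for `u ≠ 0`: the sum over `w` is invariant under translating
`w` by `a • v` with `u·v = 1`, so it may be averaged over all `a`. -/
lemma card_mul_sum_dotProduct {F : Type} [Field F] [Fintype F] {t : ℕ} (u : Fin t → F)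
    (hu : u ≠ 0) (g : F → ℤ) :
    (Fintype.card F : ℤ) * ∑ w : Fin t → F, g (u ⬝ᵥ w)
      = (Fintype.card F : ℤ) ^ t * ∑ a : F, g a := by
  classical
  obtain ⟨i, hi⟩ := Function.ne_iff.1 hu
  have hi' : u i ≠ 0 := hi
  have hv : u ⬝ᵥ Pi.single i (u i)⁻¹ = 1 := by
    simp [hi']
  have h1 : ∀ a : F, ∑ w : Fin t → F, g (u ⬝ᵥ w) = ∑ w : Fin t → F, g (u ⬝ᵥ w + a) := by
    intro a
    rw [← Equiv.sum_comp (Equiv.addRight (a • Pi.single i (u i)⁻¹ : Fin t → F))]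
    refine Finset.sum_congr rfl fun w _ => ?_
    rw [Equiv.coe_addRight, dotProduct_add, dotProduct_smul, hv, smul_eq_mul, mul_one]
  have h2 : ∀ b : F, ∑ a : F, g (b + a) = ∑ a : F, g a := fun b =>
    Equiv.sum_comp (Equiv.addLeft b) g
  calc (Fintype.card F : ℤ) * ∑ w : Fin t → F, g (u ⬝ᵥ w)
      = ∑ _a : F, ∑ w : Fin t → F, g (u ⬝ᵥ w) := by simp
    _ = ∑ a : F, ∑ w : Fin t → F, g (u ⬝ᵥ w + a) := Finset.sum_congr rfl fun a _ => h1 a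
    _ = ∑ w : Fin t → F, ∑ a : F, g (u ⬝ᵥ w + a) := Finset.sum_comm
    _ = (Fintype.card F : ℤ) ^ t * ∑ a : F, g a := by simp [h2]

/-- For `q` odd and `t ≥ 1`, the number of triples `(z, u, w)` in
`F_q × F_q^t × F_q^t` with `z ≠ 0` and `z² − 2·(u·w)` a nonzero square equals
`(q−1)(q^{2t} − q^{2t-1} + q^t + q^{t-1})/2` (stated multiplied through by `2`). -/
theorem stmt_15 (q : ℕ) (F : Type) [Field F] [Fintype F]
    (hcard : Fintype.card F = q) (hodd : Odd q)
    (t : ℕ) (ht : 1 ≤ t) :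
    2 * (Nat.card {p : F × (Fin t → F) × (Fin t → F) //
        p.1 ≠ 0 ∧ p.1 ^ 2 - 2 * (p.2.1 ⬝ᵥ p.2.2) ≠ 0 ∧
        ∃ beta : F, p.1 ^ 2 - 2 * (p.2.1 ⬝ᵥ p.2.2) = beta ^ 2} : ℤ) =
      ((q : ℤ) - 1) *
        ((q : ℤ) ^ (2 * t) - (q : ℤ) ^ (2 * t - 1) + (q : ℤ) ^ t + (q : ℤ) ^ (t - 1)) := by
  classical
  have hchar : ringChar F ≠ 2 := by
    intro h
    have := FiniteField.even_card_of_char_two h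
    rw [hcard] at this
    rcases hodd with ⟨k, hk⟩
    omega
  have h20 : (2 : F) ≠ 0 := Ring.two_ne_zero hchar
  have hq0 : (q : ℤ) ≠ 0 := by
    rcases hodd with ⟨k, hk⟩
    omega
  obtain ⟨n, rfl⟩ : ∃ n, t = n + 1 := ⟨t - 1, by omega⟩
  have hcount : 2 * (Nat.card {p : F × (Fin (n+1) → F) × (Fin (n+1) → F) //
        p.1 ≠ 0 ∧ p.1 ^ 2 - 2 * (p.2.1 ⬝ᵥ p.2.2) ≠ 0 ∧
        ∃ beta : F, p.1 ^ 2 - 2 * (p.2.1 ⬝ᵥ p.2.2) = beta ^ 2} : ℤ)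
      = ∑ z : F, if z = 0 then 0 else
          ∑ u : Fin (n+1) → F, ∑ w : Fin (n+1) → F, twoInd (z ^ 2 - 2 * (u ⬝ᵥ w)) := by
    rw [Nat.card_eq_fintype_card, Fintype.card_subtype, Finset.card_filter]
    push_cast
    rw [Finset.mul_sum, Fintype.sum_prod_type]
    refine Finset.sum_congr rfl fun z _ => ?_
    rw [Fintype.sum_prod_type]
    by_cases hz : z = 0
    · simp [hz]
    · rw [if_neg hz]
      refine Finset.sum_congr rfl fun u _ => Finset.sum_congr rfl fun w _ => ?_
      simp only [twoInd, ne_eq, hz, not_false_eq_true, true_and]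
      split_ifs <;> simp
  -- The affine substitution `a ↦ z² - 2a` permutes `F`.
  have haff : ∀ z : F, ∑ a : F, twoInd (z ^ 2 - 2 * a) = (q : ℤ) - 1 := by
    intro z
    rw [← hcard, ← sum_twoInd hchar]
    exact Equiv.sum_comp ((Equiv.mulLeft₀ (2 : F) h20).trans (Equiv.subLeft (z ^ 2))) twoInd
  have hne : ∀ z : F, ∀ u : Fin (n+1) → F, u ≠ 0 →
      ∑ w : Fin (n+1) → F, twoInd (z ^ 2 - 2 * (u ⬝ᵥ w)) = (q : ℤ) ^ n * (q - 1) := by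
    intro z u hu
    have h := card_mul_sum_dotProduct u hu (fun a => twoInd (z ^ 2 - 2 * a))
    simp only [haff, hcard] at h
    apply mul_left_cancel₀ hq0
    rw [h]
    ring
  have hinner : ∀ z : F, z ≠ 0 →
      ∑ u : Fin (n+1) → F, ∑ w : Fin (n+1) → F, twoInd (z ^ 2 - 2 * (u ⬝ᵥ w))
        = 2 * (q : ℤ) ^ (n+1) + ((q : ℤ) ^ (n+1) - 1) * ((q : ℤ) ^ n * (q - 1)) := by
    intro z hz
    rw [← Finset.add_sum_erase _ _ (Finset.mem_univ 0),
      Finset.sum_congr rfl fun u hu => hne z u (Finset.ne_of_mem_erase hu)]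
    have hz2 : twoInd (z ^ 2) = 2 := if_pos ⟨pow_ne_zero 2 hz, z, rfl⟩
    have hq1 : 1 ≤ q ^ (n+1) := Nat.one_le_pow _ _ (by rcases hodd with ⟨k, hk⟩; omega)
    simp [hz2, hcard, Finset.card_erase_of_mem, Nat.cast_sub hq1]
    ring
  rw [hcount, ← Finset.add_sum_erase _ _ (Finset.mem_univ 0), if_pos rfl,
    Finset.sum_congr rfl fun z hz => (if_neg (Finset.ne_of_mem_erase hz)).trans
      (hinner z (Finset.ne_of_mem_erase hz))]
  have hq1 : 1 ≤ q := by rcases hodd with ⟨k, hk⟩; omega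
  have e1 : 2 * (n + 1) - 1 = 2 * n + 1 := by omega
  rw [Finset.sum_const, Finset.card_erase_of_mem (Finset.mem_univ _), Finset.card_univ, hcard, e1,
    nsmul_eq_mul, Nat.cast_sub hq1, Nat.add_sub_cancel]
  push_cast
  ring
end

section
/- Let q be an odd prime power and let d ≥ 1, m ≥ 1, e ≥ 0 be integers; set n = d + m + e. Then the number of nonzero tuples (x, z₁, z₂, y, u, v, w) ∈ F_q^d × F_q^m × F_q^m × F_q × F_q^e × F_q^e × F_q^d satisfying the pair of equations −x₁² + 2·(z₁·z₂) = 0 and 2·(z₁·z₂) + y² + 2·(u·v) + 2·(x·w) = 0 equals q^{2n-1} − 1 (here x₁ denotes the first coordinate of x, and · denotes the standard dot product). -/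
open Matrix

/-!
Everything rests on one count: for a linear functional `f` on a finite vector space `V` and any
function `g : F → F`, the equation `g y + f v = 0` has exactly `|V|` solutions `(y, v)`, as soon as
`g` has a unique zero in the degenerate case `f = 0` (`card_add_linear`).

It is applied twice.

* Given `x₂, …, x_d`, `z₁` and `u`, the equation `-x₁² + 2 z₁·z₂ = 0` in `(x₁, z₂)` has `q^m`
  solutions: if the functional `2 z₁·` vanishes, the only zero of `-x₁²` is `0`
  (`card_base`).
* Given a solution `(x, z₁, z₂, u)` of the first equation, the second one, in `(y, (v, w))`, has
  `q^(e+d)` solutions: if `(v, w) ↦ 2 u·v + 2 x·w` vanishes then `x = 0`, so that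
  `2 z₁·z₂ = x₁² = 0` and the condition on `y` is `y² = 0` (`card_fiber`).

Hence there are `q^(d-1) q^m q^e · q^m · q^(e+d) = q^(2n-1)` solutions, one of which is zero.
-/

/-- If `f v₀ = 1`, the value `f v` may be traded for the free parameter `y` along the
line spanned by `v₀`; if `f = 0`, then `y` is determined and `v` is free. -/
lemma card_add_linear {F V : Type*} [Field F] [AddCommGroup V] [Module F V]
    (f : V →ₗ[F] F) (g : F → F) (h : f = 0 → ∃ y₀, ∀ y, g y = 0 ↔ y = y₀) :
    Nat.card {p : F × V // g p.1 + f p.2 = 0} = Nat.card V := by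
  by_cases hf : f = 0
  · obtain ⟨y₀, hy⟩ := h hf
    subst hf
    refine Nat.card_congr ⟨fun p => p.1.2, fun v => ⟨(y₀, v), by simp [hy]⟩, ?_, fun v => rfl⟩
    rintro ⟨⟨y, v⟩, hp⟩
    have : y = y₀ := by simpa [hy] using hp
    simp [this]
  · obtain ⟨v₁, hv₁⟩ : ∃ v, f v ≠ 0 := by
      by_contra! hc
      exact hf (LinearMap.ext hc)
    obtain ⟨v₀, hv₀⟩ : ∃ v, f v = 1 := ⟨(f v₁)⁻¹ • v₁, by simp [hv₁]⟩
    refine Nat.card_congr ⟨fun p => p.1.2 - f p.1.2 • v₀ + p.1.1 • v₀,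
      fun w => ⟨(f w, w - f w • v₀ - g (f w) • v₀), by simp [hv₀]⟩, ?_, ?_⟩
    · rintro ⟨⟨y, v⟩, hp⟩
      have hv : f v = -g y := by
        have : g y + f v = 0 := hp
        linear_combination this
      simp [hv₀, hv]
    · intro w
      simp [hv₀]

lemma card_base {F : Type} [Field F] [Fintype F] (k m e : ℕ) :
    Nat.card {b : (Fin (k + 1) → F) × (Fin m → F) × (Fin m → F) × (Fin e → F) //
      -(b.1 0) ^ 2 + 2 * (b.2.1 ⬝ᵥ b.2.2.1) = 0} = Nat.card F ^ (k + 2 * m + e) := by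
  classical
  let E : {b : (Fin (k + 1) → F) × (Fin m → F) × (Fin m → F) × (Fin e → F) //
      -(b.1 0) ^ 2 + 2 * (b.2.1 ⬝ᵥ b.2.2.1) = 0} ≃
      Σ c : (Fin k → F) × (Fin m → F) × (Fin e → F),
        {p : F × (Fin m → F) // -p.1 ^ 2 + 2 * (c.2.1 ⬝ᵥ p.2) = 0} :=
    { toFun := fun b => ⟨(Fin.tail b.1.1, b.1.2.1, b.1.2.2.2), ⟨(b.1.1 0, b.1.2.2.1), b.2⟩⟩
      invFun := fun s => ⟨(Fin.cons s.2.1.1 s.1.1, s.1.2.1, s.2.1.2, s.1.2.2), by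
        simpa using s.2.2⟩
      left_inv := fun b => by
        apply Subtype.ext
        simp [Fin.cons_self_tail]
      right_inv := fun s => by
        obtain ⟨⟨x, z, u⟩, ⟨⟨a, z'⟩, hs⟩⟩ := s
        simp }
  have hfib (c : (Fin k → F) × (Fin m → F) × (Fin e → F)) :
      Nat.card {p : F × (Fin m → F) // -p.1 ^ 2 + 2 * (c.2.1 ⬝ᵥ p.2) = 0}
        = Nat.card F ^ m := by
    have := card_add_linear ((2 : F) • dotProductBilin F F c.2.1) (fun y => -y ^ 2)
      (fun _ => ⟨0, by simp⟩)
    simpa using this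
  rw [Nat.card_congr E, Nat.card_sigma, Finset.sum_congr rfl fun c _ => hfib c]
  simp
  ring

lemma card_fiber {F : Type} [Field F] [Fintype F] (h2 : (2 : F) ≠ 0) (k e : ℕ)
    (x : Fin (k + 1) → F) (u : Fin e → F) (c : F) (hc : -(x 0) ^ 2 + c = 0) :
    Nat.card {p : F × (Fin e → F) × (Fin (k + 1) → F) //
      c + p.1 ^ 2 + 2 * (u ⬝ᵥ p.2.1) + 2 * (x ⬝ᵥ p.2.2) = 0} = Nat.card F ^ (e + k + 1) := by
  classical
  have := card_add_linear
    (((2 : F) • dotProductBilin F F u).coprod ((2 : F) • dotProductBilin F F x))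
    (fun y => c + y ^ 2) (fun h => ⟨0, fun y => by
      -- evaluate the vanishing functional at `v = 0`, `w` the first basis vector
      have h0 := LinearMap.congr_fun h (0, Pi.single 0 1)
      have hx : x 0 = 0 := by simpa [h2] using h0
      have : c = 0 := by simpa [hx] using hc
      simp [this]⟩)
  simp only [LinearMap.coprod_apply, LinearMap.smul_apply, dotProductBilin_apply_apply,
    smul_eq_mul, ← add_assoc] at this
  rw [this]
  simp
  ring

/-- For `q` odd, `d, m ≥ 1`, `e ≥ 0` and `n = d + m + e`, the number of
nonzero tuples `(x, z₁, z₂, y, u, v, w)` with `−x₁² + 2(z₁·z₂) = 0` and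
`2(z₁·z₂) + y² + 2(u·v) + 2(x·w) = 0` equals `q^{2n−1} − 1`. -/
theorem stmt_16 (q : ℕ) (F : Type) [Field F] [Fintype F]
    (hcard : Fintype.card F = q) (hodd : Odd q)
    (d m e n : ℕ) (hd : 1 ≤ d) (hm : 1 ≤ m) (hn : n = d + m + e) :
    Nat.card {p : (Fin d → F) × (Fin m → F) × (Fin m → F) × F ×
        (Fin e → F) × (Fin e → F) × (Fin d → F) //
      p ≠ 0 ∧
      -(p.1 ⟨0, hd⟩) ^ 2 + 2 * (p.2.1 ⬝ᵥ p.2.2.1) = 0 ∧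
      2 * (p.2.1 ⬝ᵥ p.2.2.1) + p.2.2.2.1 ^ 2 + 2 * (p.2.2.2.2.1 ⬝ᵥ p.2.2.2.2.2.1)
        + 2 * (p.1 ⬝ᵥ p.2.2.2.2.2.2) = 0} =
      q ^ (2 * n - 1) - 1 := by
  classical
  have h2 : (2 : F) ≠ 0 := by
    apply Ring.two_ne_zero
    intro h
    have := FiniteField.even_card_of_char_two h
    rw [hcard] at this
    obtain ⟨k, hk⟩ := hodd
    omega
  obtain ⟨k, rfl⟩ : ∃ k, d = k + 1 := ⟨d - 1, by omega⟩
  let S : Set ((Fin (k + 1) → F) × (Fin m → F) × (Fin m → F) × F ×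
        (Fin e → F) × (Fin e → F) × (Fin (k + 1) → F)) :=
    {p | -(p.1 0) ^ 2 + 2 * (p.2.1 ⬝ᵥ p.2.2.1) = 0 ∧
      2 * (p.2.1 ⬝ᵥ p.2.2.1) + p.2.2.2.1 ^ 2 + 2 * (p.2.2.2.2.1 ⬝ᵥ p.2.2.2.2.2.1)
        + 2 * (p.1 ⬝ᵥ p.2.2.2.2.2.2) = 0}
  have h0 : (0 : (Fin (k + 1) → F) × (Fin m → F) × (Fin m → F) × F ×
        (Fin e → F) × (Fin e → F) × (Fin (k + 1) → F)) ∈ S := by simp [S]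
  let E : S ≃ Σ b : {b : (Fin (k + 1) → F) × (Fin m → F) × (Fin m → F) × (Fin e → F) //
      -(b.1 0) ^ 2 + 2 * (b.2.1 ⬝ᵥ b.2.2.1) = 0},
      {p : F × (Fin e → F) × (Fin (k + 1) → F) //
        2 * (b.1.2.1 ⬝ᵥ b.1.2.2.1) + p.1 ^ 2 + 2 * (b.1.2.2.2 ⬝ᵥ p.2.1)
          + 2 * (b.1.1 ⬝ᵥ p.2.2) = 0} :=
    { toFun := fun p => ⟨⟨(p.1.1, p.1.2.1, p.1.2.2.1, p.1.2.2.2.2.1), p.2.1⟩,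
        ⟨(p.1.2.2.2.1, p.1.2.2.2.2.2.1, p.1.2.2.2.2.2.2), p.2.2⟩⟩
      invFun := fun s => ⟨(s.1.1.1, s.1.1.2.1, s.1.1.2.2.1, s.2.1.1, s.1.1.2.2.2, s.2.1.2.1,
        s.2.1.2.2), s.1.2, s.2.2⟩
      left_inv := fun _ => rfl
      right_inv := fun _ => rfl }
  have hS : S.ncard = q ^ (2 * n - 1) := by
    rw [← Nat.card_coe_set_eq, Nat.card_congr E, Nat.card_sigma,
      Finset.sum_congr rfl fun b _ => card_fiber h2 k e b.1.1 b.1.2.2.2 _ b.2,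
      Finset.sum_const, Finset.card_univ, ← Nat.card_eq_fintype_card, card_base,
      Nat.card_eq_fintype_card, hcard, smul_eq_mul, ← pow_add]
    congr 1
    omega
  rw [← hS, ← Set.ncard_sdiff_singleton_of_mem h0, ← Nat.card_coe_set_eq]
  exact Nat.card_congr (Equiv.subtypeEquivRight fun p => And.comm)
end

section
/- Let q be an odd prime power and let d ≥ 1, m ≥ 1, e ≥ 0 be integers; set n = d + m + e and s = d + e. Then the number of tuples (x, z₁, z₂, y, u, v, w) ∈ F_q^d × F_q^m × F_q^m × F_q × F_q^e × F_q^e × F_q^d such that x₁² − 2·(z₁·z₂) is a nonzero square in F_q and 2·(z₁·z₂) + y² + 2·(u·v) + 2·(x·w) = 0 equals (q−1)·(q^{2n-1} + q^{2n-s-1} + q^{n+s-1} − q^{n-1})/2 (here x₁ denotes the first coordinate of x, and · denotes the standard dot product). -/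
open Matrix

/-!
Write `[P]` for the indicator of `P`. A nonzero square has exactly two square roots, so twice the
count is the sum over `β ≠ 0` of the numbers `N(β)` of tuples with `x₁² - 2 z₁·z₂ = β²` on the
quadric (`two_mul_ind_sq`), and it suffices to see that `N(β)` does not depend on `β`.

The basic count is that of the solutions `w` of `x·w = c` (`card_dot`): there are `q^(d-1)` of them
if `x ≠ 0`, and `q^d` or none if `x = 0`. Summing over `x` gives the number of `(u, v)` with
`u·v = t` (`card_hyp`), and hence the number `q^(2k) + q^k` of `(y, u, v)` with
`y² + κ u·v = β²` (`card_par`). In `N(β)` the variable `w` is eliminated by `card_dot`; the generic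
term is a multiple of the number of `(x₁, z₁, z₂)` with `x₁² - 2 z₁·z₂ = β²`, and the correction
from `x = 0` involves only `-2 z₁·z₂ = β²` and `y² + 2 u·v = β²`. All identities are stated with
both sides multiplied by a power of `q`, which avoids subtraction in exponents.
-/

open Classical in
/-- The integer-valued indicator of a proposition. -/
noncomputable def ind (P : Prop) : ℤ := if P then 1 else 0

lemma ind_true {P : Prop} (h : P) : ind P = 1 := if_pos h

lemma ind_false {P : Prop} (h : ¬ P) : ind P = 0 := if_neg h

lemma ind_and (P Q : Prop) : ind (P ∧ Q) = ind P * ind Q := by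
  unfold ind; split_ifs <;> simp_all

lemma ind_congr {P Q : Prop} (h : P ↔ Q) : ind P = ind Q := by rw [propext h]

lemma natCard_eq_sum_ind {α : Type*} [Fintype α] (P : α → Prop) :
    (Nat.card {a // P a} : ℤ) = ∑ a, ind (P a) := by
  classical
  rw [Nat.card_eq_fintype_card, Fintype.card_subtype]
  simp [ind]

lemma sum_ind_eq_mul {α : Type*} [Fintype α] (a : α) (f : α → ℤ) :
    ∑ b, ind (b = a) * f b = f a := by
  classical
  simp [ind]

lemma sum_ind_eq {α : Type*} [Fintype α] (a : α) : ∑ b, ind (a = b) = 1 := by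
  classical
  simp [ind]

lemma sum_const_pi {F : Type} [Fintype F] (k : ℕ) (c : ℤ) :
    ∑ _w : Fin k → F, c = (Fintype.card F : ℤ) ^ k * c := by
  classical
  simp

section Counting

variable {F : Type} [Field F] [Fintype F]

/-- The number of solutions of the linear equation `x·w = c`, times `q`. For `x ≠ 0` all fibres of
`w ↦ x·w` are translates of each other. -/
lemma card_dot {k : ℕ} (x : Fin k → F) (c : F) :
    (Fintype.card F : ℤ) * ∑ w, ind (x ⬝ᵥ w = c) =
      (Fintype.card F : ℤ) ^ k * (1 + ind (x = 0) * (Fintype.card F * ind (c = 0) - 1)) := by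
  classical
  by_cases hx : x = 0
  · subst hx
    have : ∀ w : Fin k → F, ind ((0 : Fin k → F) ⬝ᵥ w = c) = ind (c = 0) := fun w =>
      ind_congr (by rw [zero_dotProduct, eq_comm])
    simp only [this, sum_const_pi, ind_true]
    ring
  · obtain ⟨i, hi⟩ : ∃ i, x i ≠ 0 := by
      by_contra! h
      exact hx (funext h)
    have key : ∀ c' : F, ∑ w, ind (x ⬝ᵥ w = c') = ∑ w, ind (x ⬝ᵥ w = c) := by
      intro c'
      refine Fintype.sum_equiv (Equiv.addRight (Pi.single i ((c - c') / x i))) _ _ fun w => ?_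
      apply ind_congr
      simp only [Equiv.coe_addRight, dotProduct_add, dotProduct_single]
      rw [mul_div_cancel₀ _ hi]
      constructor
      · rintro rfl; ring
      · intro h; linear_combination h
    have h1 : ∑ c' : F, ∑ w, ind (x ⬝ᵥ w = c') = (Fintype.card F : ℤ) ^ k := by
      rw [Finset.sum_comm]
      simp only [sum_ind_eq, sum_const_pi, mul_one]
    rw [Finset.sum_congr rfl fun c' _ => key c'] at h1
    rw [ind_false hx, zero_mul, add_zero, mul_one, ← h1]
    simp

/-- A sum over vectors of a function of one coordinate, times `q`. -/
lemma sum_coord {k : ℕ} (i : Fin k) (f : F → ℤ) :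
    (Fintype.card F : ℤ) * ∑ x : Fin k → F, f (x i) =
      (Fintype.card F : ℤ) ^ k * ∑ a, f a := by
  classical
  have h : ∀ a : F, (Fintype.card F : ℤ) * ∑ x : Fin k → F, ind (x i = a) =
      (Fintype.card F : ℤ) ^ k := by
    intro a
    have := card_dot (Pi.single i (1 : F)) a
    have hne : (Pi.single i (1 : F) : Fin k → F) ≠ 0 := by simp
    rw [ind_false hne] at this
    simpa using this
  have h2 : ∀ x : Fin k → F, f (x i) = ∑ a, ind (x i = a) * f a := by
    intro x
    rw [← sum_ind_eq_mul (x i) f]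
    exact Finset.sum_congr rfl fun a _ => by rw [ind_congr eq_comm]
  rw [Finset.sum_congr rfl fun x _ => h2 x, Finset.sum_comm, Finset.mul_sum, Finset.mul_sum]
  refine Finset.sum_congr rfl fun a _ => ?_
  rw [← Finset.sum_mul, ← mul_assoc, h]

/-- The number of `(u, v)` with `u·v = t`, times `q`. -/
lemma card_hyp (k : ℕ) (t : F) :
    (Fintype.card F : ℤ) * ∑ u : Fin k → F, ∑ v, ind (u ⬝ᵥ v = t) =
      (Fintype.card F : ℤ) ^ (2 * k) - (Fintype.card F : ℤ) ^ k
        + (Fintype.card F : ℤ) ^ (k + 1) * ind (t = 0) := by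
  rw [Finset.mul_sum]
  simp only [card_dot]
  rw [← Finset.mul_sum, Finset.sum_add_distrib, sum_ind_eq_mul, sum_const_pi]
  ring

/-- A nonzero square has exactly two square roots. -/
lemma two_mul_ind_sq (h2 : (2 : F) ≠ 0) (t : F) :
    2 * ind (t ≠ 0 ∧ ∃ b : F, t = b ^ 2) = ∑ b : F, ind (b ≠ 0) * ind (t = b ^ 2) := by
  classical
  by_cases h : t ≠ 0 ∧ ∃ b : F, t = b ^ 2
  · obtain ⟨ht, b, rfl⟩ := h
    have hb : b ≠ 0 := by rintro rfl; simp at ht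
    have hne : b ≠ -b := fun h => hb <| by
      have : 2 * b = 0 := by linear_combination h
      exact (mul_eq_zero.mp this).resolve_left h2
    have hs : ∀ c : F, ind (c ≠ 0) * ind (b ^ 2 = c ^ 2) = ind (b = c) + ind (-b = c) := by
      intro c
      by_cases h1 : b = c
      · subst h1
        rw [ind_true hb, ind_true rfl, ind_true rfl, ind_false hne.symm]; rfl
      by_cases h3 : -b = c
      · subst h3
        rw [ind_true (neg_ne_zero.mpr hb), ind_true (by ring), ind_false h1, ind_true rfl]; rfl
      have : ¬ b ^ 2 = c ^ 2 := by
        rw [sq_eq_sq_iff_eq_or_eq_neg, not_or]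
        exact ⟨h1, fun h => h3 (by rw [h, neg_neg])⟩
      rw [ind_false this, ind_false h1, ind_false h3]; simp
    rw [ind_true ⟨ht, b, rfl⟩, Finset.sum_congr rfl fun c _ => hs c, Finset.sum_add_distrib,
      sum_ind_eq, sum_ind_eq]
    rfl
  · rw [ind_false h, mul_zero, eq_comm]
    refine Finset.sum_eq_zero fun b _ => ?_
    rw [← ind_and]
    apply ind_false
    rintro ⟨hb, rfl⟩
    exact h ⟨pow_ne_zero 2 hb, b, rfl⟩

/-- The number of `(y, u, v)` with `y² + κ u·v = β²`, where `β ≠ 0`: the correction term of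
`card_hyp` occurs for the two values `y = ±β`. -/
lemma card_par (h2 : (2 : F) ≠ 0) (k : ℕ) {κ β : F} (hκ : κ ≠ 0) (hβ : β ≠ 0) :
    ∑ y : F, ∑ u : Fin k → F, ∑ v, ind (y ^ 2 + κ * (u ⬝ᵥ v) = β ^ 2) =
      (Fintype.card F : ℤ) ^ (2 * k) + (Fintype.card F : ℤ) ^ k := by
  have hq : (Fintype.card F : ℤ) ≠ 0 := by simp
  apply mul_left_cancel₀ hq
  have h1 : ∀ y : F, ∀ u v : Fin k → F, ind (y ^ 2 + κ * (u ⬝ᵥ v) = β ^ 2) =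
      ind (u ⬝ᵥ v = (β ^ 2 - y ^ 2) / κ) := fun y u v =>
    ind_congr (by
      rw [eq_div_iff hκ]
      constructor <;> intro h <;> linear_combination h)
  have h3 : ∀ y : F, ind ((β ^ 2 - y ^ 2) / κ = 0) = ind (y ≠ 0) * ind (β ^ 2 = y ^ 2) := by
    intro y
    rw [← ind_and]
    apply ind_congr
    rw [div_eq_zero_iff, or_iff_left hκ, sub_eq_zero]
    refine ⟨fun h => ⟨?_, h⟩, fun h => h.2⟩
    rintro rfl
    simp [hβ] at h
  simp only [h1]
  rw [Finset.mul_sum]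
  simp only [card_hyp, h3]
  rw [Finset.sum_add_distrib, ← Finset.mul_sum, ← two_mul_ind_sq h2,
    ind_true ⟨pow_ne_zero 2 hβ, β, rfl⟩]
  simp only [Finset.sum_const, Finset.card_univ, nsmul_eq_mul]
  ring

/-- The number of tuples on the quadric with `x₁² - 2 z₁·z₂ = β²`, times `q`, for a fixed
`β ≠ 0`. -/
lemma card_fixed_root (h2 : (2 : F) ≠ 0) {d : ℕ} (m e : ℕ) (i : Fin d) {β : F} (hβ : β ≠ 0) :
    (Fintype.card F : ℤ) * ∑ x : Fin d → F, ∑ z₁ : Fin m → F, ∑ z₂ : Fin m → F, ∑ y : F,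
      ∑ u : Fin e → F, ∑ v : Fin e → F, ∑ w : Fin d → F,
        ind (x i ^ 2 - 2 * (z₁ ⬝ᵥ z₂) = β ^ 2) *
          ind (2 * (z₁ ⬝ᵥ z₂) + y ^ 2 + 2 * (u ⬝ᵥ v) + 2 * (x ⬝ᵥ w) = 0) =
      (Fintype.card F : ℤ) ^ d *
        ((Fintype.card F : ℤ) ^ (d + 2 * e) *
            ((Fintype.card F : ℤ) ^ (2 * m) + (Fintype.card F : ℤ) ^ m) +
          (Fintype.card F : ℤ) ^ e *
            ((Fintype.card F : ℤ) ^ (2 * m) - (Fintype.card F : ℤ) ^ m)) := by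
  have hq : (Fintype.card F : ℤ) ≠ 0 := by simp
  -- Elimination of `w`.
  have hw : ∀ (x : Fin d → F) (A : F),
      (Fintype.card F : ℤ) * ∑ w : Fin d → F, ind (A + 2 * (x ⬝ᵥ w) = 0) =
        (Fintype.card F : ℤ) ^ d *
          (1 + ind (x = 0) * (Fintype.card F * ind (A = 0) - 1)) := by
    intro x A
    have h1 : ∀ w : Fin d → F, ind (A + 2 * (x ⬝ᵥ w) = 0) = ind (x ⬝ᵥ w = -A / 2) := fun w =>
      ind_congr (by
        rw [eq_div_iff h2]
        constructor <;> intro h <;> linear_combination h)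
    simp only [h1, card_dot]
    rw [ind_congr (show -A / 2 = 0 ↔ A = 0 by simp [h2])]
  -- Elimination of `y`, `u`, `v`: the terms left are the generic one and the one at `x = 0`.
  have hyuv : ∀ (x : Fin d → F) (z₁ z₂ : Fin m → F),
      (Fintype.card F : ℤ) * ∑ y : F, ∑ u : Fin e → F, ∑ v : Fin e → F, ∑ w : Fin d → F,
        ind (x i ^ 2 - 2 * (z₁ ⬝ᵥ z₂) = β ^ 2) *
          ind (2 * (z₁ ⬝ᵥ z₂) + y ^ 2 + 2 * (u ⬝ᵥ v) + 2 * (x ⬝ᵥ w) = 0) =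
      (Fintype.card F : ℤ) ^ (d + 2 * e + 1) * ind (x i ^ 2 - 2 * (z₁ ⬝ᵥ z₂) = β ^ 2) +
      (Fintype.card F : ℤ) ^ (d + e + 1) *
        (ind (x = 0) * ind (z₁ ⬝ᵥ z₂ = -β ^ 2 / 2)) := by
    intro x z₁ z₂
    by_cases hC : x i ^ 2 - 2 * (z₁ ⬝ᵥ z₂) = β ^ 2
    · simp only [ind_true hC, one_mul, Finset.mul_sum]
      simp only [← Finset.mul_sum, hw]
      simp only [Finset.mul_sum, mul_add, mul_sub, Finset.sum_add_distrib, Finset.sum_sub_distrib]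
      by_cases hx : x = 0
      · have hz : 2 * (z₁ ⬝ᵥ z₂) = -β ^ 2 := by
          rw [hx, Pi.zero_apply] at hC
          linear_combination -hC
        have h1 : ∀ (y : F) (u v : Fin e → F),
            ind (2 * (z₁ ⬝ᵥ z₂) + y ^ 2 + 2 * (u ⬝ᵥ v) = 0) =
              ind (y ^ 2 + 2 * (u ⬝ᵥ v) = β ^ 2) := fun y u v =>
          ind_congr (by
            rw [hz]
            constructor <;> intro h <;> linear_combination h)
        have hz' : z₁ ⬝ᵥ z₂ = -β ^ 2 / 2 := by
          rw [eq_div_iff h2]; linear_combination hz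
        simp only [h1, ind_true hx, ind_true hz', ← Finset.mul_sum, card_par h2 e h2 hβ,
          sum_const_pi]
        simp only [Finset.sum_const, Finset.card_univ, nsmul_eq_mul]
        ring
      · simp only [ind_false hx, zero_mul, mul_zero, Finset.sum_const_zero, sum_const_pi]
        simp only [Finset.sum_const, Finset.card_univ, nsmul_eq_mul]
        ring
    · have h0 : ind (x = 0) * ind (z₁ ⬝ᵥ z₂ = -β ^ 2 / 2) = 0 := by
        rw [← ind_and]
        apply ind_false
        rintro ⟨rfl, hz⟩
        apply hC
        rw [eq_div_iff h2] at hz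
        rw [Pi.zero_apply]
        linear_combination -hz
      simp only [ind_false hC, zero_mul, Finset.sum_const_zero, mul_zero, h0, add_zero]
  -- The generic term.
  have hG := sum_coord i fun a : F =>
    ∑ z₁ : Fin m → F, ∑ z₂, ind (a ^ 2 - 2 * (z₁ ⬝ᵥ z₂) = β ^ 2)
  have hG' := card_par h2 m (neg_ne_zero.mpr h2) hβ
  simp only [neg_mul, ← sub_eq_add_neg] at hG'
  rw [hG'] at hG
  -- The term at `x = 0`; the value `-β² / 2` is nonzero.
  have hB := card_hyp m (-β ^ 2 / 2)
  rw [ind_false (show ¬ -β ^ 2 / 2 = 0 by simp [h2, hβ]), mul_zero, add_zero] at hB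
  have hS : ∀ f : ℤ, ∑ x : Fin d → F, ind (x = 0) * f = f := fun f => sum_ind_eq_mul 0 fun _ => f
  apply mul_left_cancel₀ hq
  rw [Finset.mul_sum]
  simp only [Finset.mul_sum (Finset.univ : Finset (Fin m → F)), hyuv]
  simp only [Finset.sum_add_distrib, ← Finset.mul_sum]
  rw [hS]
  linear_combination (Fintype.card F : ℤ) ^ (d + 2 * e + 1) * hG
    + (Fintype.card F : ℤ) ^ (d + e + 1) * hB

end Counting

/-- For `q` odd, `d, m ≥ 1`, `e ≥ 0`, `n = d + m + e`, `s = d + e`, the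
number of tuples `(x, z₁, z₂, y, u, v, w)` with `x₁² − 2(z₁·z₂)` a nonzero square and
`2(z₁·z₂) + y² + 2(u·v) + 2(x·w) = 0` equals
`(q−1)(q^{2n−1} + q^{2n−s−1} + q^{n+s−1} − q^{n−1})/2` (stated multiplied through by 2). -/
theorem stmt_17 (q : ℕ) (F : Type) [Field F] [Fintype F]
    (hcard : Fintype.card F = q) (hodd : Odd q)
    (d m e n s : ℕ) (hd : 1 ≤ d) (hm : 1 ≤ m) (hn : n = d + m + e) (hs : s = d + e) :
    2 * (Nat.card {p : (Fin d → F) × (Fin m → F) × (Fin m → F) × F ×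
        (Fin e → F) × (Fin e → F) × (Fin d → F) //
      ((p.1 ⟨0, hd⟩) ^ 2 - 2 * (p.2.1 ⬝ᵥ p.2.2.1) ≠ 0 ∧
        ∃ beta : F, (p.1 ⟨0, hd⟩) ^ 2 - 2 * (p.2.1 ⬝ᵥ p.2.2.1) = beta ^ 2) ∧
      2 * (p.2.1 ⬝ᵥ p.2.2.1) + p.2.2.2.1 ^ 2 + 2 * (p.2.2.2.2.1 ⬝ᵥ p.2.2.2.2.2.1)
        + 2 * (p.1 ⬝ᵥ p.2.2.2.2.2.2) = 0} : ℤ) =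
      ((q : ℤ) - 1) * ((q : ℤ) ^ (2 * n - 1) + (q : ℤ) ^ (2 * n - s - 1)
        + (q : ℤ) ^ (n + s - 1) - (q : ℤ) ^ (n - 1)) := by
  have hq : (Fintype.card F : ℤ) ≠ 0 := by simp
  have h2 : (2 : F) ≠ 0 := by
    apply Ring.two_ne_zero
    rw [Ne, FiniteField.even_card_iff_char_two, hcard]
    have := Nat.odd_iff.mp hodd
    omega
  subst hcard hn hs
  obtain ⟨k, rfl⟩ : ∃ k, d = k + 1 := ⟨d - 1, by omega⟩
  rw [natCard_eq_sum_ind, Finset.mul_sum]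
  simp only [ind_and (_ ∧ _), ← mul_assoc, two_mul_ind_sq h2, Finset.sum_mul]
  rw [Finset.sum_comm]
  simp only [mul_assoc, ← Finset.mul_sum]
  simp only [Fintype.sum_prod_type]
  apply mul_left_cancel₀ hq
  rw [Finset.mul_sum]
  have key : ∀ β : F, (Fintype.card F : ℤ) * (ind (β ≠ 0) * ∑ x : Fin (k + 1) → F,
      ∑ z₁ : Fin m → F, ∑ z₂ : Fin m → F, ∑ y : F,
      ∑ u : Fin e → F, ∑ v : Fin e → F, ∑ w : Fin (k + 1) → F,
        ind (x ⟨0, hd⟩ ^ 2 - 2 * (z₁ ⬝ᵥ z₂) = β ^ 2) *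
          ind (2 * (z₁ ⬝ᵥ z₂) + y ^ 2 + 2 * (u ⬝ᵥ v) + 2 * (x ⬝ᵥ w) = 0)) =
      (1 - ind (β = 0)) * ((Fintype.card F : ℤ) ^ (k + 1) *
        ((Fintype.card F : ℤ) ^ (k + 1 + 2 * e) *
            ((Fintype.card F : ℤ) ^ (2 * m) + (Fintype.card F : ℤ) ^ m) +
          (Fintype.card F : ℤ) ^ e *
            ((Fintype.card F : ℤ) ^ (2 * m) - (Fintype.card F : ℤ) ^ m))) := by
    intro β
    by_cases hβ : β = 0
    · rw [ind_true hβ, ind_false (not_not.mpr hβ)]; ring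
    · rw [ind_false hβ, ind_true hβ, one_mul, card_fixed_root h2 m e _ hβ]; ring
  simp only [key]
  have hz : ∑ β : F, ind (β = 0) = 1 := by
    simpa using sum_ind_eq_mul (0 : F) fun _ => (1 : ℤ)
  rw [← Finset.sum_mul, Finset.sum_sub_distrib, hz]
  simp only [Finset.sum_const, Finset.card_univ, nsmul_eq_mul]
  rw [show 2 * (k + 1 + m + e) - 1 = 2 * k + 2 * m + 2 * e + 1 by omega,
    show 2 * (k + 1 + m + e) - (k + 1 + e) - 1 = k + 2 * m + e by omega,
    show k + 1 + m + e + (k + 1 + e) - 1 = 2 * k + m + 2 * e + 1 by omega,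
    show k + 1 + m + e - 1 = k + m + e by omega]
  ring
end

section
/- Let n ≥ 3 be an integer and let q ≥ 3 be a real number. For all integers r, s with 1 ≤ r ≤ 2n−1, r+1 ≤ s ≤ 2r and s ≤ 2n, one has q^{n−s/2+1} + q^{n−s/2} + q^{s/2+1} − q^{s/2−1} + q^{r−1} ≤ q^{2n−2} + q^{n+1} − q^{n−1} + q + 1, with equality if and only if r = 2n−1 and s = 2n. -/
/-!
Put `t = q^{s/2}` and `Q = q^n`. Since `r ≤ s - 1`, the term `q^{r-1}` is at most
`q^{s-2} = t²/q²`. After this replacement, right side minus left side factors as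
`(Q - t) * ((Q + t)/q² + (q - 1/q) - (q + 1)/t)`. Here `q ≤ t ≤ Q` and `Q ≥ q³`, so the second factor
is at least `2q - 1 - 2/q > 0`. The inequality follows, with equality exactly when `r = s - 1` and
`t = Q`, the latter meaning `s = 2n`.
-/

/-- Positivity of the cofactor of `Q - t` in the difference of the two sides. -/
lemma cofactor_pos {q t Q : ℝ} (hq : 3 ≤ q) (ht : q ≤ t) (hQ : q ^ 3 ≤ Q) :
    0 < (Q + t) / q ^ 2 + (q - 1 / q) - (q + 1) / t := by
  have hq0 : 0 < q := by linarith
  have h1 : q ≤ (Q + t) / q ^ 2 := by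
    rw [le_div_iff₀ (by positivity)]
    nlinarith
  have h2 : (q + 1) / t ≤ (q + 1) / q := by gcongr
  have h3 : (q + 1) / q = 1 + 1 / q := by field_simp
  have h4 : 1 / q ≤ 1 := by
    rw [div_le_one hq0]
    linarith
  linarith


/-- For real `q ≥ 3`, integers `n ≥ 3` and `r, s` with `1 ≤ r ≤ 2n−1`,
`r+1 ≤ s ≤ 2r`, `s ≤ 2n`, one has
`q^{n−s/2+1} + q^{n−s/2} + q^{s/2+1} − q^{s/2−1} + q^{r−1} ≤ q^{2n−2} + q^{n+1} − q^{n−1} + q + 1`,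
with equality iff `r = 2n−1` and `s = 2n` (powers are real powers). -/
theorem stmt_18 (q : ℝ) (hq : 3 ≤ q) (n r s : ℤ)
    (hn : 3 ≤ n) (hr1 : 1 ≤ r) (hr2 : r ≤ 2 * n - 1)
    (hs1 : r + 1 ≤ s) (hs2 : s ≤ 2 * r) (hs3 : s ≤ 2 * n) :
    q ^ ((n : ℝ) - (s : ℝ) / 2 + 1) + q ^ ((n : ℝ) - (s : ℝ) / 2)
        + q ^ ((s : ℝ) / 2 + 1) - q ^ ((s : ℝ) / 2 - 1) + q ^ ((r : ℝ) - 1) ≤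
      q ^ (2 * (n : ℝ) - 2) + q ^ ((n : ℝ) + 1) - q ^ ((n : ℝ) - 1) + q + 1 ∧
    (q ^ ((n : ℝ) - (s : ℝ) / 2 + 1) + q ^ ((n : ℝ) - (s : ℝ) / 2)
        + q ^ ((s : ℝ) / 2 + 1) - q ^ ((s : ℝ) / 2 - 1) + q ^ ((r : ℝ) - 1) =
      q ^ (2 * (n : ℝ) - 2) + q ^ ((n : ℝ) + 1) - q ^ ((n : ℝ) - 1) + q + 1 ↔
      (r = 2 * n - 1 ∧ s = 2 * n)) := by
  have hq0 : 0 < q := by linarith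
  have hq1 : 1 < q := by linarith
  have hnR : (3 : ℝ) ≤ n := by exact_mod_cast hn
  have hs2R : (2 : ℝ) ≤ s := by exact_mod_cast (by omega : (2 : ℤ) ≤ s)
  have hsnR : (s : ℝ) ≤ 2 * n := by exact_mod_cast hs3
  have hrsR : (r : ℝ) + 1 ≤ s := by exact_mod_cast hs1
  have hr_le : q ^ ((r : ℝ) - 1) ≤ q ^ ((s : ℝ) - 2) :=
    (Real.rpow_le_rpow_left_iff hq1).2 (by linarith)
  have ht : q ≤ q ^ ((s : ℝ) / 2) := by
    simpa using (Real.rpow_le_rpow_left_iff hq1).2 (by linarith : (1 : ℝ) ≤ (s : ℝ) / 2)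
  have hQ : q ^ 3 ≤ q ^ (n : ℝ) := by
    have h := (Real.rpow_le_rpow_left_iff hq1).2 hnR
    have h3 : q ^ (3 : ℝ) = q ^ 3 := by exact_mod_cast Real.rpow_natCast q 3
    rwa [h3] at h
  have htQ : q ^ ((s : ℝ) / 2) ≤ q ^ (n : ℝ) :=
    (Real.rpow_le_rpow_left_iff hq1).2 (by linarith)
  have e0 : q ^ ((s : ℝ) - 2) = (q ^ ((s : ℝ) / 2)) ^ 2 / q ^ 2 := by
    rw [← Real.rpow_natCast (q ^ ((s : ℝ) / 2)), ← Real.rpow_mul hq0.le, Real.rpow_sub hq0]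
    norm_num
  have e1 : q ^ (2 * (n : ℝ) - 2) = (q ^ (n : ℝ)) ^ 2 / q ^ 2 := by
    rw [← Real.rpow_natCast (q ^ (n : ℝ)), ← Real.rpow_mul hq0.le, Real.rpow_sub hq0]
    norm_num [mul_comm]
  have hinj : q ^ ((s : ℝ) / 2) = q ^ (n : ℝ) → s = 2 * n := by
    intro h
    have h' : (s : ℝ) / 2 = n :=
      le_antisymm ((Real.rpow_le_rpow_left_iff hq1).1 h.le)
        ((Real.rpow_le_rpow_left_iff hq1).1 h.ge)
    have h'' : (s : ℝ) = 2 * n := by linarith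
    exact_mod_cast h''
  have hrinj : q ^ ((r : ℝ) - 1) = q ^ ((s : ℝ) - 2) → r = s - 1 := by
    intro h
    have h' := (Real.rpow_le_rpow_left_iff hq1).1 h.ge
    have h'' : (r : ℝ) = s - 1 := by linarith
    exact_mod_cast h''
  have hrs : r = s - 1 → q ^ ((r : ℝ) - 1) = q ^ ((s : ℝ) - 2) := by
    rintro rfl
    push_cast
    ring_nf
  have hsn : s = 2 * n → q ^ ((s : ℝ) / 2) = q ^ (n : ℝ) := by
    rintro rfl
    push_cast
    ring_nf
  rw [Real.rpow_add hq0, Real.rpow_sub hq0, Real.rpow_add hq0, Real.rpow_sub hq0 ((s : ℝ) / 2) 1,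
    Real.rpow_add hq0, Real.rpow_sub hq0 (n : ℝ) 1, Real.rpow_one, e1]
  rw [e0] at hr_le hrinj hrs
  generalize q ^ ((s : ℝ) / 2) = t at *
  generalize q ^ (n : ℝ) = Q at *
  generalize q ^ ((r : ℝ) - 1) = R at *
  have ht0 : 0 < t := by linarith
  have hB := cofactor_pos hq ht hQ
  have key : Q ^ 2 / q ^ 2 + Q * q - Q / q + q + 1
        - (Q / t * q + Q / t + t * q - t / q + R)
      = (Q - t) * ((Q + t) / q ^ 2 + (q - 1 / q) - (q + 1) / t) + (t ^ 2 / q ^ 2 - R) := by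
    field_simp
    ring
  have hprod := mul_nonneg (sub_nonneg.2 htQ) hB.le
  refine ⟨by linarith, fun h => ?_, fun ⟨h1, h2⟩ => ?_⟩
  · -- Both nonnegative summands of the difference vanish.
    have hz : (Q - t) * ((Q + t) / q ^ 2 + (q - 1 / q) - (q + 1) / t) = 0 := by linarith
    have hR : R = t ^ 2 / q ^ 2 := by linarith
    have hs := hinj (by linarith [(mul_eq_zero.1 hz).resolve_right hB.ne'])
    have hr := hrinj hR
    omega
  · have hR := hrs (by omega)
    rw [hsn h2, sub_self, zero_mul] at key
    rw [hsn h2] at hR ⊢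
    linarith
end

section
/- Let q be an odd prime power, n ≥ 3 an integer, and M an invertible symmetric (2n+1)×(2n+1) matrix over F_q. If S is a nonzero antisymmetric (2n+1)×(2n+1) matrix over F_q such that the number of 2-dimensional subspaces of F_q^{2n+1} that are totally singular for M and totally isotropic for S equals the maximum value f_max(n,q) := (q^{n-1}−1)·(q^{3n-2}+q^{3n-3}−q^{3n-4}+q^{2n}−q^{n-1}−1)/((q−1)²·(q+1)), then S has rank 2; equivalently, the radical ker S of the alternating form has dimension 2n−1. -/
/-!
The planes are counted through their ordered bases `(p, v)`. Write `B` for the symmetric form of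
`M` and put `T = M⁻¹ S`, a skew map for `B` with `B (T p) v = ± pᵀ S v`. For a fixed nonzero
singular `p`, the admissible `v` are the singular vectors orthogonal to both `p` and `T p`, outside
the line of `p`.

* The numbers of singular vectors in `V`, in `p^⊥` and in `⟨p, T p⟩^⊥` come from quadratic
  exponential sums (`card_singular_orthogonal`). The number of variables being odd, the sum of
  `ψ (t B(v, v))` over `v` is `χ(t) C` with `χ` the quadratic character. The counts are
  `q ^ (2n)`, `q ^ (2n-1)`, and, if `p` is not an eigenvector of `T`, at most
  `q ^ (2n-2) + (q-1) q ^ (n-1)` (`card_singular_perp_pair_le`).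
* The resulting bound on the number of pairs increases with the number `a` of nonzero singular
  eigenvectors of `T`, and the
  bound obtained with `a = q ^ (2n-2) - 1` is exactly `f_max` times `(q² - 1)(q² - q)`.
* The rank of `S` is even (`even_rank_of_skew`), so if it is not 2 the kernel of `T` has dimension
  at most `2n - 3`. The eigenspaces for nonzero eigenvalues are totally singular, of dimension at
  most `n`. So `a ≤ (q ^ (2n-3) - 1) + (q-1)(q ^ n - 1) ≤ q ^ (2n-2) - q`
  (`card_eigenvectors_le`), and `f_max` is not attained.
-/

open Matrix

/-! ### Exponential sums and counts of singular vectors -/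

section CharacterSums

variable {F : Type} [Field F]

lemma sum_addChar_functional {ψ : AddChar F ℂ} (hψ : ψ.IsPrimitive)
    {A : Type} [AddCommGroup A] [Module F A] [Fintype A] (l : A →ₗ[F] F) [Decidable (l = 0)] :
    ∑ a, ψ (l a) = if l = 0 then (Fintype.card A : ℂ) else 0 := by
  split_ifs with h
  · simp [h]
  · obtain ⟨a, ha⟩ : ∃ a, l a ≠ 0 := by
      by_contra! hc
      exact h (LinearMap.ext hc)
    obtain ⟨x, hx⟩ := AddChar.ne_one_iff.mp (hψ ha)
    have hne : ψ.compAddMonoidHom l.toAddMonoidHom ≠ 0 := by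
      rw [AddChar.ne_zero_iff]
      refine ⟨x • a, ?_⟩
      simpa [mul_comm] using hx
    exact AddChar.sum_eq_zero_iff_ne_zero.mpr hne

lemma addChar_sum (ψ : AddChar F ℂ) {ι : Type} (s : Finset ι) (g : ι → F) :
    ψ (∑ i ∈ s, g i) = ∏ i ∈ s, ψ (g i) := by
  classical
  induction s using Finset.induction_on with
  | empty => simp
  | insert a s ha ih => rw [Finset.sum_insert ha, Finset.prod_insert ha, AddChar.map_add_eq_mul, ih]

variable [Fintype F]

lemma ringChar_ne_two_of_odd (hodd : Odd (Fintype.card F)) : ringChar F ≠ 2 := by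
  rw [Ne, FiniteField.even_card_iff_char_two]
  obtain ⟨k, hk⟩ := hodd
  omega

lemma two_ne_zero_of_odd (hodd : Odd (Fintype.card F)) : (2 : F) ≠ 0 :=
  Ring.two_ne_zero (ringChar_ne_two_of_odd hodd)

open Classical in
/-- The quadratic character with complex values. -/
noncomputable def quadCharC (F : Type) [Field F] [Fintype F] : MulChar F ℂ :=
  (quadraticChar F).ringHomComp (Int.castRingHom ℂ)

lemma quadCharC_ne_one (hodd : Odd (Fintype.card F)) : quadCharC F ≠ 1 := by
  classical
  have h := quadraticChar_ne_one (ringChar_ne_two_of_odd hodd)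
  exact MulChar.ringHomComp_ne_one_iff (Int.cast_injective) |>.mpr h

lemma quadCharC_isQuadratic : (quadCharC F).IsQuadratic := by
  classical
  exact (quadraticChar_isQuadratic F).comp _

lemma norm_quadCharC {x : F} (hx : x ≠ 0) : ‖quadCharC F x‖ = 1 := by
  rcases quadCharC_isQuadratic x with h | h | h
  · exact absurd h ((hx.isUnit.map (quadCharC F)).ne_zero)
  · simp [h]
  · simp [h]

lemma quadCharC_mul_self {x : F} (hx : x ≠ 0) : quadCharC F x * quadCharC F x = 1 := by
  rcases quadCharC_isQuadratic x with h | h | h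
  · exact absurd h ((hx.isUnit.map (quadCharC F)).ne_zero)
  · simp [h]
  · simp [h]

lemma quadCharC_inv (x : F) : quadCharC F x⁻¹ = quadCharC F x := by
  rw [← MulChar.inv_apply', quadCharC_isQuadratic.inv]

/-- One-variable quadratic exponential sums are Gauss sums of the quadratic character. -/
lemma sum_addChar_sq (hodd : Odd (Fintype.card F)) {ψ : AddChar F ℂ} (hψ : ψ.IsPrimitive)
    {t : F} (ht : t ≠ 0) :
    ∑ x, ψ (t * x ^ 2) = quadCharC F t * gaussSum (quadCharC F) ψ := by
  classical
  have h1 : ∑ x, ψ (t * x ^ 2) = ∑ y, (quadCharC F y + 1) * ψ (t * y) := by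
    rw [← Finset.sum_fiberwise (s := Finset.univ) (g := fun x : F => x ^ 2)]
    refine Finset.sum_congr rfl fun y _ => ?_
    have h2 : ∀ x ∈ Finset.univ.filter (fun x : F => x ^ 2 = y), ψ (t * x ^ 2) = ψ (t * y) := by
      intro x hx
      rw [(Finset.mem_filter.mp hx).2]
    rw [Finset.sum_congr rfl h2, Finset.sum_const, nsmul_eq_mul]
    congr 1
    have h3 := quadraticChar_card_sqrts (ringChar_ne_two_of_odd hodd) y
    have h4 : (Finset.univ.filter (fun x : F => x ^ 2 = y)) = {x : F | x ^ 2 = y}.toFinset := by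
      ext; simp
    rw [h4]
    have h5 := congrArg (Int.cast : ℤ → ℂ) h3
    push_cast at h5
    rw [h5]
    simp [quadCharC, MulChar.ringHomComp_apply]
  have h6 : ∑ y, ψ (t * y) = 0 := by
    have := AddChar.sum_mulShift t hψ
    simp only [ht, if_false] at this
    simpa [mul_comm] using this
  simp_rw [h1, add_mul, Finset.sum_add_distrib, one_mul]
  rw [h6, add_zero]
  have h7 := gaussSum_mulShift (quadCharC F) ψ (Units.mk0 t ht)
  rw [← h7, ← mul_assoc, Units.val_mk0, quadCharC_mul_self ht, one_mul]
  simp [gaussSum, AddChar.mulShift_apply]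

lemma norm_gaussSum_sq (hodd : Odd (Fintype.card F)) {ψ : AddChar F ℂ} (hψ : ψ.IsPrimitive) :
    ‖gaussSum (quadCharC F) ψ‖ ^ 2 = Fintype.card F := by
  rw [← norm_pow, gaussSum_sq (quadCharC_ne_one hodd) quadCharC_isQuadratic hψ, norm_mul,
    norm_quadCharC (by simp)]
  simp

variable {V : Type} [AddCommGroup V] [Module F V] [Fintype V]

/-- The exponential sum of a nondegenerate quadratic form in an odd number of variables: as a
function of the scaling parameter it is proportional to the quadratic character. -/
lemma exists_sum_addChar_form (hodd : Odd (Fintype.card F)) {ψ : AddChar F ℂ}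
    (hψ : ψ.IsPrimitive) (B : LinearMap.BilinForm F V) (hsymm : LinearMap.IsSymm B)
    (hB : B.Nondegenerate) {n : ℕ} (hd : Module.finrank F V = 2 * n + 1) :
    ∃ C : ℂ, ‖C * gaussSum (quadCharC F) ψ‖ = (Fintype.card F : ℝ) ^ (n + 1) ∧
      ∀ t : F, t ≠ 0 → ∑ v, ψ (t * B v v) = quadCharC F t * C := by
  classical
  have : Invertible (2 : F) := invertibleOfNonzero (two_ne_zero_of_odd hodd)
  have : FiniteDimensional F V := Module.Finite.of_finite
  obtain ⟨b, hb⟩ := LinearMap.BilinForm.exists_orthogonal_basis hsymm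
  set c := gaussSum (quadCharC F) ψ
  have hw : ∀ i, B (b i) (b i) ≠ 0 := fun i =>
    hb.not_isOrtho_basis_self_of_separatingLeft hB.1 i
  have hform : ∀ x, B (b.equivFun.symm x) (b.equivFun.symm x)
      = ∑ i, B (b i) (b i) * x i ^ 2 := by
    intro x
    rw [Module.Basis.equivFun_symm_apply]
    simp only [map_sum, LinearMap.sum_apply, map_smul, LinearMap.smul_apply, smul_eq_mul]
    refine Finset.sum_congr rfl fun i _ => ?_
    rw [Finset.sum_eq_single i]
    · ring
    · intro j _ hji
      have : B (b j) (b i) = 0 := hb hji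
      simp [this]
    · simp
  refine ⟨∏ i, (quadCharC F (B (b i) (b i)) * c), ?_, ?_⟩
  · rw [norm_mul, norm_prod]
    simp only [norm_mul, norm_quadCharC (hw _), one_mul, Finset.prod_const, Finset.card_univ,
      Fintype.card_fin, hd]
    rw [← pow_succ, show 2 * n + 1 + 1 = 2 * (n + 1) by ring, pow_mul, norm_gaussSum_sq hodd hψ]
  · intro t ht
    rw [← Equiv.sum_comp b.equivFun.symm.toEquiv]
    have h1 : ∀ x : Fin (Module.finrank F V) → F,
        ψ (t * B (b.equivFun.symm x) (b.equivFun.symm x))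
        = ∏ i, ψ (t * B (b i) (b i) * x i ^ 2) := by
      intro x
      rw [hform, Finset.mul_sum, addChar_sum]
      simp only [mul_assoc]
    have h2 : ∑ x : Fin (Module.finrank F V) → F, ∏ i, ψ (t * B (b i) (b i) * x i ^ 2)
        = ∏ i, ∑ y, ψ (t * B (b i) (b i) * y ^ 2) := by
      rw [Finset.prod_univ_sum]
      simp
    refine (Finset.sum_congr rfl fun x _ => h1 x).trans (h2.trans ?_)
    have h3 : ∀ i, ∑ y, ψ (t * B (b i) (b i) * y ^ 2)
        = quadCharC F t * (quadCharC F (B (b i) (b i)) * c) := by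
      intro i
      rw [sum_addChar_sq hodd hψ (mul_ne_zero ht (hw i)), map_mul, mul_assoc]
    simp_rw [h3]
    rw [Finset.prod_mul_distrib, Finset.prod_const, Finset.card_univ, Fintype.card_fin]
    congr 1
    rw [hd, pow_succ, pow_mul, pow_two, quadCharC_mul_self ht, one_pow, one_mul]

open Classical in
/-- Number of singular vectors orthogonal to the image of an injective linear map `f : A → V`,
expressed by an exponential sum over `A`. -/
lemma card_singular_orthogonal (hodd : Odd (Fintype.card F)) {ψ : AddChar F ℂ}
    (hψ : ψ.IsPrimitive) (B : LinearMap.BilinForm F V) (hsymm : LinearMap.IsSymm B)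
    (hB : B.Nondegenerate) {C : ℂ}
    (hC : ∀ t : F, t ≠ 0 → ∑ v, ψ (t * B v v) = quadCharC F t * C)
    {A : Type} [AddCommGroup A] [Module F A] [Fintype A] (f : A →ₗ[F] V)
    (hf : Function.Injective f) :
    ((Finset.univ.filter fun v => B v v = 0 ∧ ∀ a, B (f a) v = 0).card : ℂ)
        * (Fintype.card F * Fintype.card A)
      = Fintype.card V + C * ∑ t ∈ Finset.univ.erase (0 : F),
        quadCharC F t * ∑ a, ψ (-(4 * t)⁻¹ * B (f a) (f a)) := by
  have h2 := two_ne_zero_of_odd hodd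
  have h4 : (4 : F) ≠ 0 := by
    rw [show (4 : F) = 2 * 2 by norm_num]
    exact mul_ne_zero h2 h2
  have hL : ((Finset.univ.filter fun v => B v v = 0 ∧ ∀ a, B (f a) v = 0).card : ℂ)
        * (Fintype.card F * Fintype.card A)
      = ∑ v, (∑ t, ψ (t * B v v)) * ∑ a, ψ (B (f a) v) := by
    rw [Finset.card_filter, Nat.cast_sum, Finset.sum_mul]
    refine Finset.sum_congr rfl fun v _ => ?_
    rw [AddChar.sum_mulShift _ hψ]
    have h5 := sum_addChar_functional hψ ((LinearMap.flip B v).comp f)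
    simp only [LinearMap.comp_apply, LinearMap.flip_apply] at h5
    rw [h5]
    have h6 : ((LinearMap.flip B v).comp f = 0) ↔ ∀ a, B (f a) v = 0 := by
      rw [LinearMap.ext_iff]; simp
    by_cases ha : B v v = 0 <;> by_cases hb : ∀ a, B (f a) v = 0 <;> simp [h6, ha, hb]
  rw [hL]
  have hswap : ∑ v, (∑ t, ψ (t * B v v)) * ∑ a, ψ (B (f a) v)
      = ∑ t, ∑ a, ∑ v, ψ (t * B v v + B (f a) v) := by
    simp_rw [Finset.sum_mul_sum, ← AddChar.map_add_eq_mul]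
    rw [Finset.sum_comm]
    exact Finset.sum_congr rfl fun t _ => Finset.sum_comm
  rw [hswap, ← Finset.add_sum_erase _ _ (Finset.mem_univ (0 : F))]
  congr 1
  · have h7 : ∀ a, ∑ v, ψ (0 * B v v + B (f a) v)
        = if a = 0 then (Fintype.card V : ℂ) else 0 := by
      intro a
      have h8 := sum_addChar_functional hψ (B (f a))
      simp only [zero_mul, zero_add]
      rw [h8]
      have h9 : B (f a) = 0 ↔ a = 0 := by
        constructor
        · intro h
          have := hB.1 (f a) (fun y => by rw [h]; rfl)
          exact hf (by rw [this, map_zero])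
        · rintro rfl
          simp
      simp [h9]
    simp_rw [h7]
    simp
  · rw [Finset.mul_sum]
    refine Finset.sum_congr rfl fun t ht => ?_
    have ht0 : t ≠ 0 := (Finset.mem_erase.mp ht).1
    rw [← mul_assoc, mul_comm C, ← hC t ht0, Finset.mul_sum]
    refine Finset.sum_congr rfl fun a => fun _ => ?_
    -- completing the square
    rw [← Equiv.sum_comp (Equiv.addRight (-(2 * t)⁻¹ • f a)), Finset.sum_mul]
    refine Finset.sum_congr rfl fun v _ => ?_
    rw [← AddChar.map_add_eq_mul]
    congr 1
    have hs : B v (f a) = B (f a) v := by simpa using hsymm.eq v (f a)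
    simp only [Equiv.coe_addRight, map_add, LinearMap.add_apply, map_smul, LinearMap.smul_apply,
      smul_eq_mul, hs]
    field_simp
    ring

lemma sum_quadCharC (hodd : Odd (Fintype.card F)) [DecidableEq F] :
    ∑ t ∈ Finset.univ.erase (0 : F), quadCharC F t = 0 := by
  have h := MulChar.sum_eq_zero_of_ne_one (quadCharC_ne_one hodd)
  rw [← Finset.add_sum_erase _ _ (Finset.mem_univ (0 : F))] at h
  rwa [MulChar.map_zero, zero_add] at h

open Classical in
/-- If the image of `f` is totally singular, the correction term vanishes since the quadratic
character sums to zero. -/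
lemma card_singular_orthogonal_singular (hodd : Odd (Fintype.card F))
    (B : LinearMap.BilinForm F V) (hsymm : LinearMap.IsSymm B)
    (hB : B.Nondegenerate) {n : ℕ} (hd : Module.finrank F V = 2 * n + 1)
    {A : Type} [AddCommGroup A] [Module F A] [Fintype A] (f : A →ₗ[F] V)
    (hf : Function.Injective f) (hs : ∀ a, B (f a) (f a) = 0) :
    (Finset.univ.filter fun v => B v v = 0 ∧ ∀ a, B (f a) v = 0).card
        * (Fintype.card F * Fintype.card A) = Fintype.card F ^ (2 * n + 1) := by
  have hψ := AddChar.FiniteField.primitiveChar_to_Complex_isPrimitive F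
  obtain ⟨C, -, hC⟩ := exists_sum_addChar_form hodd hψ B hsymm hB hd
  have h := card_singular_orthogonal hodd hψ B hsymm hB hC f hf
  simp only [hs, mul_zero, AddChar.map_zero_eq_one, Finset.sum_const, ← Finset.sum_mul,
    sum_quadCharC hodd, zero_mul, add_zero] at h
  rw [← hd, ← Module.card_eq_pow_finrank (K := F) (V := V)]
  exact_mod_cast h

open Classical in
/-- A nondegenerate form in `2n + 1` variables has `q ^ (2n)` singular vectors. -/
lemma card_singular (hodd : Odd (Fintype.card F))
    (B : LinearMap.BilinForm F V) (hsymm : LinearMap.IsSymm B)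
    (hB : B.Nondegenerate) {n : ℕ} (hd : Module.finrank F V = 2 * n + 1) :
    (Finset.univ.filter fun v => B v v = 0).card = Fintype.card F ^ (2 * n) := by
  have h := card_singular_orthogonal_singular hodd B hsymm hB hd
    (0 : PUnit →ₗ[F] V) (fun _ _ _ => rfl) (by simp)
  simp only [LinearMap.zero_apply, map_zero, implies_true, and_true, Fintype.card_punit,
    mul_one] at h
  rw [pow_succ] at h
  exact Nat.eq_of_mul_eq_mul_right Fintype.card_pos h

open Classical in
lemma card_singular_perp (hodd : Odd (Fintype.card F))
    (B : LinearMap.BilinForm F V) (hsymm : LinearMap.IsSymm B)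
    (hB : B.Nondegenerate) {n : ℕ} (hn : 1 ≤ n) (hd : Module.finrank F V = 2 * n + 1)
    {p : V} (hp : p ≠ 0) (hp0 : B p p = 0) :
    (Finset.univ.filter fun v => B v v = 0 ∧ B p v = 0).card = Fintype.card F ^ (2 * n - 1) := by
  have h := card_singular_orthogonal_singular hodd B hsymm hB hd
    (LinearMap.toSpanSingleton F V p) (LinearMap.ker_eq_bot.mp
      (LinearMap.ker_toSpanSingleton F hp)) (by simp [hp0])
  have h1 : ∀ v, (∀ a : F, B (LinearMap.toSpanSingleton F V p a) v = 0) ↔ B p v = 0 := by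
    intro v
    refine ⟨fun h => by simpa using h 1, fun h a => by simp [h]⟩
  simp only [h1] at h
  rw [show 2 * n + 1 = (2 * n - 1) + 2 by omega, pow_add, ← pow_two] at h
  exact Nat.eq_of_mul_eq_mul_right (pow_pos Fintype.card_pos 2) h

open Classical in
/-- Singular vectors orthogonal to `p` and `w`, where `p` is singular and orthogonal to `w`. The
extreme case is that `w` is nonsingular and `⟨p, w⟩^⊥ / ⟨p⟩` is hyperbolic. -/
lemma card_singular_perp_pair_le (hodd : Odd (Fintype.card F))
    (B : LinearMap.BilinForm F V) (hsymm : LinearMap.IsSymm B)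
    (hB : B.Nondegenerate) {n : ℕ} (hd : Module.finrank F V = 2 * n + 1)
    {p w : V} (hpw : LinearIndependent F ![p, w]) (hp0 : B p p = 0) (hw0 : B p w = 0) :
    (Finset.univ.filter fun v => B v v = 0 ∧ B p v = 0 ∧ B w v = 0).card * Fintype.card F ^ 3
      + Fintype.card F ^ (n + 2) ≤ Fintype.card F ^ (2 * n + 1) + Fintype.card F ^ (n + 3) := by
  set q := Fintype.card F with hq
  have hq1 : 1 ≤ q := Fintype.card_pos
  let f : F × F →ₗ[F] V :=
    (LinearMap.toSpanSingleton F V p).coprod (LinearMap.toSpanSingleton F V w)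
  have hfa : ∀ a, f a = a.1 • p + a.2 • w := fun a => by simp [f]
  have hwp : B w p = 0 := by
    rw [← hw0]; simpa using (hsymm.eq p w).symm
  have hf : Function.Injective f := by
    rw [← LinearMap.ker_eq_bot, LinearMap.ker_eq_bot']
    rintro ⟨a, b⟩ h
    rw [hfa] at h
    obtain ⟨h1, h2⟩ := LinearIndependent.pair_iff.mp hpw a b h
    simp [h1, h2]
  have hQ : ∀ a, B (f a) (f a) = a.2 ^ 2 * B w w := by
    intro a
    rw [hfa]
    simp only [map_add, LinearMap.add_apply, map_smul, LinearMap.smul_apply, smul_eq_mul, hp0,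
      hw0, hwp]
    ring
  have h1 : ∀ v, (∀ a, B (f a) v = 0) ↔ B p v = 0 ∧ B w v = 0 := by
    intro v
    constructor
    · intro h
      refine ⟨?_, ?_⟩
      · simpa [hfa] using h (1, 0)
      · simpa [hfa] using h (0, 1)
    · rintro ⟨h, h'⟩ a
      simp [hfa, h, h']
  by_cases hww : B w w = 0
  · have h := card_singular_orthogonal_singular hodd B hsymm hB hd f hf (by simp [hQ, hww])
    simp only [h1, Fintype.card_prod, ← hq] at h
    rw [show q * (q * q) = q ^ 3 by ring] at h
    rw [h]
    have : q ^ (n + 2) ≤ q ^ (n + 3) := Nat.pow_le_pow_right hq1 (by omega)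
    omega
  · have hψ := AddChar.FiniteField.primitiveChar_to_Complex_isPrimitive F
    set ψ := AddChar.FiniteField.primitiveChar_to_Complex F
    obtain ⟨C, hCn, hC⟩ := exists_sum_addChar_form hodd hψ B hsymm hB hd
    have h := card_singular_orthogonal hodd hψ B hsymm hB hC f hf
    simp only [h1, Fintype.card_prod, ← hq] at h
    have h2 := two_ne_zero_of_odd hodd
    have h4 : (4 : F) ≠ 0 := by
      rw [show (4 : F) = 2 * 2 by norm_num]
      exact mul_ne_zero h2 h2
    have hin : ∀ t ∈ Finset.univ.erase (0 : F),
        ‖C * (quadCharC F t * ∑ a, ψ (-(4 * t)⁻¹ * B (f a) (f a)))‖ = (q : ℝ) ^ (n + 2) := by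
      intro t ht
      have ht0 : t ≠ 0 := (Finset.mem_erase.mp ht).1
      have hne : -(4 * t)⁻¹ * B w w ≠ 0 :=
        mul_ne_zero (neg_ne_zero.mpr (inv_ne_zero (mul_ne_zero h4 ht0))) hww
      have h5 : ∑ a, ψ (-(4 * t)⁻¹ * B (f a) (f a))
          = q * (quadCharC F (-(4 * t)⁻¹ * B w w) * gaussSum (quadCharC F) ψ) := by
        rw [← sum_addChar_sq hodd hψ hne, Fintype.sum_prod_type]
        simp only [hQ, Finset.sum_const, Finset.card_univ, nsmul_eq_mul, ← hq]
        congr 1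
        refine Finset.sum_congr rfl fun x _ => ?_
        congr 1
        ring
      rw [h5, show C * (quadCharC F t * (q * (quadCharC F (-(4 * t)⁻¹ * B w w)
        * gaussSum (quadCharC F) ψ))) = quadCharC F t * (quadCharC F (-(4 * t)⁻¹ * B w w) *
          (q * (C * gaussSum (quadCharC F) ψ))) by ring, norm_mul, norm_mul, norm_mul, hCn,
        norm_quadCharC ht0, norm_quadCharC hne, Complex.norm_natCast]
      ring
    have hcardV : Fintype.card V = q ^ (2 * n + 1) := by
      rw [Module.card_eq_pow_finrank (K := F) (V := V), hd]
    rw [hcardV] at h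
    set X := (Finset.univ.filter fun v => B v v = 0 ∧ B p v = 0 ∧ B w v = 0).card
    have hX : (X : ℝ) * q ^ 3 ≤ q ^ (2 * n + 1) + (q - 1) * q ^ (n + 2) := by
      have h6 : (X : ℝ) * q ^ 3 = ‖(X : ℂ) * (q * ((q * q : ℕ) : ℂ))‖ := by
        rw [norm_mul, norm_mul, Complex.norm_natCast, Complex.norm_natCast, Complex.norm_natCast]
        push_cast
        ring
      rw [h6, h]
      refine (norm_add_le _ _).trans (add_le_add ?_ ?_)
      · rw [Complex.norm_natCast]; push_cast; exact le_rfl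
      · rw [Finset.mul_sum]
        refine (norm_sum_le _ _).trans ?_
        rw [Finset.sum_congr rfl hin, Finset.sum_const, Finset.card_erase_of_mem (Finset.mem_univ _),
          Finset.card_univ, ← hq, nsmul_eq_mul, Nat.cast_sub hq1, Nat.cast_one]
    have h7 : (X : ℝ) * q ^ 3 + q ^ (n + 2) ≤ q ^ (2 * n + 1) + q ^ (n + 3) := by
      have : (q : ℝ) ^ (n + 3) = q * q ^ (n + 2) := by ring
      rw [this]
      linarith
    exact_mod_cast h7

end CharacterSums

/-! ### Eigenvectors of skew maps and the count of pairs -/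

section SkewMaps

variable {F : Type} [Field F] [Fintype F] {V : Type} [AddCommGroup V] [Module F V] [Fintype V]

/-- Eigenspaces of a skew map for nonzero eigenvalues are totally singular, hence of dimension at
most half that of `V`. -/
lemma finrank_eigenspace_le (hodd : Odd (Fintype.card F))
    (B : LinearMap.BilinForm F V)
    (hB : B.Nondegenerate) {n : ℕ} (hd : Module.finrank F V = 2 * n + 1)
    (T : V →ₗ[F] V) (hT : ∀ x y, B (T x) y = -B x (T y)) {c : F} (hc : c ≠ 0) :
    Module.finrank F (Module.End.eigenspace T c) ≤ n := by
  have : FiniteDimensional F V := Module.Finite.of_finite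
  set W := Module.End.eigenspace T c
  have hle : W ≤ B.orthogonal W := by
    intro y hy x hx
    have hx' : T x = c • x := Module.End.mem_eigenspace_iff.mp hx
    have hy' : T y = c • y := Module.End.mem_eigenspace_iff.mp hy
    have h := hT x y
    rw [hx', hy'] at h
    simp only [map_smul, LinearMap.smul_apply, smul_eq_mul] at h
    have h2 : 2 * c * B x y = 0 := by linear_combination h
    exact (mul_eq_zero.mp h2).resolve_left (mul_ne_zero (two_ne_zero_of_odd hodd) hc)
  have h1 := Submodule.finrank_mono hle
  rw [LinearMap.BilinForm.finrank_orthogonal hB] at h1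
  omega

open Classical in
lemma card_nonzero_mem (W : Submodule F V) :
    (Finset.univ.filter fun p => p ≠ 0 ∧ p ∈ W).card
      = Fintype.card F ^ Module.finrank F W - 1 := by
  have h : (Finset.univ.filter fun p => p ≠ 0 ∧ p ∈ W)
      = (Finset.univ.filter fun p => p ∈ W).erase 0 := by
    ext; simp
  rw [h, Finset.card_erase_of_mem (by simp), ← Module.card_eq_pow_finrank (K := F) (V := W),
    Fintype.card_subtype]

open Classical in
/-- A skew map whose kernel has codimension at least four has few eigenvectors. -/
lemma card_eigenvectors_le (hodd : Odd (Fintype.card F))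
    (B : LinearMap.BilinForm F V)
    (hB : B.Nondegenerate) {n : ℕ} (hn : 3 ≤ n) (hd : Module.finrank F V = 2 * n + 1)
    (T : V →ₗ[F] V) (hT : ∀ x y, B (T x) y = -B x (T y))
    (hker : Module.finrank F (LinearMap.ker T) ≤ 2 * n - 3) :
    (Finset.univ.filter fun p => p ≠ 0 ∧ ∃ c : F, c • p = T p).card + Fintype.card F
      ≤ Fintype.card F ^ (2 * n - 2) := by
  set q := Fintype.card F with hq
  have hq1 : 1 ≤ q := Fintype.card_pos
  have hsub : (Finset.univ.filter fun p => p ≠ 0 ∧ ∃ c : F, c • p = T p) ⊆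
      Finset.univ.biUnion fun c : F =>
        Finset.univ.filter fun p => p ≠ 0 ∧ p ∈ Module.End.eigenspace T c := by
    intro p hp
    simp only [Finset.mem_filter, Finset.mem_univ, true_and] at hp
    obtain ⟨h0, c, hc⟩ := hp
    simp only [Finset.mem_biUnion, Finset.mem_filter, Finset.mem_univ, true_and]
    exact ⟨c, h0, Module.End.mem_eigenspace_iff.mpr hc.symm⟩
  have h1 := (Finset.card_le_card hsub).trans Finset.card_biUnion_le
  simp only [card_nonzero_mem, ← hq] at h1
  rw [← Finset.add_sum_erase _ _ (Finset.mem_univ (0 : F)), Module.End.eigenspace_zero] at h1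
  have h2 : ∑ c ∈ Finset.univ.erase (0 : F),
      (q ^ Module.finrank F (Module.End.eigenspace T c) - 1) ≤ (q - 1) * (q ^ n - 1) := by
    have := Finset.sum_le_card_nsmul (Finset.univ.erase (0 : F))
      (fun c => q ^ Module.finrank F (Module.End.eigenspace T c) - 1) (q ^ n - 1) (by
        intro c hc
        have := finrank_eigenspace_le hodd B hB hd T hT (Finset.mem_erase.mp hc).1
        exact Nat.sub_le_sub_right (Nat.pow_le_pow_right hq1 this) 1)
    rwa [Finset.card_erase_of_mem (Finset.mem_univ _), Finset.card_univ, ← hq, smul_eq_mul] at this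
  have h3 : q ^ Module.finrank F (LinearMap.ker T) - 1 ≤ q ^ (2 * n - 3) - 1 :=
    Nat.sub_le_sub_right (Nat.pow_le_pow_right hq1 hker) 1
  have h4 : q ^ n ≤ q ^ (2 * n - 3) := Nat.pow_le_pow_right hq1 (by omega)
  have h5 : q ^ (2 * n - 2) = q ^ (2 * n - 3) * q := by
    rw [← pow_succ]; congr 1; omega
  have h6 : 1 ≤ q ^ n := Nat.one_le_pow _ _ hq1
  rw [h5]
  have h7 := h1.trans (add_le_add h3 h2)
  have hq1' : (1 : ℤ) ≤ q := by exact_mod_cast hq1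
  zify [hq1, h6, h6.trans h4] at h7 h4 ⊢
  nlinarith [mul_nonneg (sub_nonneg.mpr h4) (sub_nonneg.mpr hq1')]

open Classical in
/-- If `ker T` has dimension at most `2n - 3`, strict upper bound for the number of ordered bases of
totally singular planes isotropic for the alternating form `(u, v) ↦ B (T u) v`. The parameter `x`
stands for `q ^ (n - 1)`, and the bound is the one given by `x ^ 2 - 1` singular eigenvectors. -/
lemma card_pairs_lt (hodd : Odd (Fintype.card F))
    (B : LinearMap.BilinForm F V) (hsymm : LinearMap.IsSymm B)
    (hB : B.Nondegenerate) {n : ℕ} (hn : 3 ≤ n) (hd : Module.finrank F V = 2 * n + 1)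
    (T : V →ₗ[F] V) (hT : ∀ x y, B (T x) y = -B x (T y))
    (hker : Module.finrank F (LinearMap.ker T) ≤ 2 * n - 3) (q x : ℤ)
    (hq : q = Fintype.card F) (hx : x = q ^ (n - 1)) :
    ((Finset.univ.filter fun s : V × V => LinearIndependent F ![s.1, s.2] ∧ B s.1 s.1 = 0 ∧
      B s.2 s.2 = 0 ∧ B s.1 s.2 = 0 ∧ B (T s.1) s.2 = 0).card : ℤ)
      < (x ^ 2 - 1) * (q * x ^ 2 - q)
        + (q ^ 2 * x ^ 2 - x ^ 2) * (x ^ 2 + q * x - x - q) := by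
  have hqpos : 0 < Fintype.card F := Fintype.card_pos
  have hq3 : 3 ≤ q := by
    have h1 : 1 < Fintype.card F := Fintype.one_lt_card
    obtain ⟨k, hk⟩ := hodd
    omega
  have hx1 : 1 < x := by
    rw [hx]; exact one_lt_pow₀ (by omega) (by omega)
  have e1 : q ^ (2 * n - 1) = q * x ^ 2 := by
    rw [hx, ← pow_mul, ← pow_succ']; congr 1; omega
  have e2 : q ^ (2 * n - 2) = x ^ 2 := by
    rw [hx, ← pow_mul]; congr 1; omega
  have e3 : q ^ (2 * n) = q ^ 2 * x ^ 2 := by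
    rw [hx, ← pow_mul, ← pow_add]; congr 1; omega
  have e4 : q ^ n = q * x := by
    rw [hx, ← pow_succ']; congr 1; omega
  set Sg := Finset.univ.filter fun p => p ≠ 0 ∧ B p p = 0 with hSg
  set Eig := Finset.univ.filter fun p => p ≠ 0 ∧ ∃ c : F, c • p = T p with hEig
  have hSgcard : (Sg.card : ℤ) = q ^ 2 * x ^ 2 - 1 := by
    have h : Sg = (Finset.univ.filter fun p => B p p = 0).erase 0 := by
      ext; simp [hSg]
    rw [h, Finset.card_erase_of_mem (by simp), card_singular hodd B hsymm hB hd,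
      Nat.cast_sub (Nat.one_le_pow _ _ hqpos), ← e3, hq]
    push_cast; rfl
  have hEigcard : (Eig.card : ℤ) + q ≤ x ^ 2 := by
    have := card_eigenvectors_le hodd B hB hn hd T hT hker
    rw [← e2, hq]
    exact_mod_cast this
  -- vectors completing a given `p` to a basis of an admissible plane
  have hfib : ∀ p ∈ Sg, ((Finset.univ.filter fun v => LinearIndependent F ![p, v] ∧ B p p = 0 ∧
      B v v = 0 ∧ B p v = 0 ∧ B (T p) v = 0).card : ℤ)
      ≤ if p ∈ Eig then q * x ^ 2 - q else x ^ 2 + q * x - x - q := by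
    intro p hp
    obtain ⟨hp0, hpp⟩ : p ≠ 0 ∧ B p p = 0 := by simpa [hSg] using hp
    have hTp : B p (T p) = 0 := by
      have h1 := hT p p
      have h2 : B p (T p) = B (T p) p := by simpa using hsymm.eq p (T p)
      have h3 : 2 * B p (T p) = 0 := by linear_combination h1 + h2
      exact (mul_eq_zero.mp h3).resolve_left (two_ne_zero_of_odd hodd)
    have hTp' : B (T p) p = 0 := by rw [hT, hTp, neg_zero]
    have hspan : (Finset.univ.filter fun v => LinearIndependent F ![p, v] ∧ B p p = 0 ∧
        B v v = 0 ∧ B p v = 0 ∧ B (T p) v = 0).card + Fintype.card F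
        ≤ (Finset.univ.filter fun v => B v v = 0 ∧ B p v = 0 ∧ B (T p) v = 0).card := by
      have hc : (Finset.univ.image fun c : F => c • p).card = Fintype.card F := by
        rw [Finset.card_image_of_injective _ (smul_left_injective F hp0), Finset.card_univ]
      rw [← hc, ← Finset.card_union_of_disjoint]
      · refine Finset.card_le_card ?_
        intro v hv
        simp only [Finset.mem_union, Finset.mem_filter, Finset.mem_univ, true_and,
          Finset.mem_image] at hv ⊢
        rcases hv with ⟨_, _, h⟩ | ⟨c, rfl⟩
        · exact h
        · simp [hpp, hTp']
      · rw [Finset.disjoint_left]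
        intro v hv hv'
        simp only [Finset.mem_filter, Finset.mem_univ, true_and, Finset.mem_image] at hv hv'
        obtain ⟨c, hc⟩ := hv'
        exact (LinearIndependent.pair_iff' hp0).mp hv.1 c hc
    zify at hspan
    rw [← hq] at hspan
    split_ifs with he
    · have h1 : (Finset.univ.filter fun v => B v v = 0 ∧ B p v = 0 ∧ B (T p) v = 0).card
          ≤ (Finset.univ.filter fun v => B v v = 0 ∧ B p v = 0).card := by
        refine Finset.card_le_card fun v hv => ?_
        simp only [Finset.mem_filter, Finset.mem_univ, true_and] at hv ⊢
        exact ⟨hv.1, hv.2.1⟩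
      rw [card_singular_perp hodd B hsymm hB (by omega) hd hp0 hpp] at h1
      zify at h1
      rw [← hq, e1] at h1
      linarith
    · have hli : LinearIndependent F ![p, T p] := by
        rw [LinearIndependent.pair_iff' hp0]
        intro c hc
        exact he (Finset.mem_filter.mpr ⟨Finset.mem_univ _, hp0, c, hc⟩)
      have h1 := card_singular_perp_pair_le hodd B hsymm hB hd hli hpp hTp
      zify at h1
      rw [← hq, show n + 2 = (n - 1) + 3 by omega,
        show 2 * n + 1 = (2 * n - 2) + 3 by omega, pow_add, pow_add, pow_add, ← hx, e2, e4,
        ← add_mul, ← add_mul] at h1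
      have h2 := le_of_mul_le_mul_right h1 (by positivity)
      linarith
  have hsum : ((Finset.univ.filter fun s : V × V => LinearIndependent F ![s.1, s.2] ∧
      B s.1 s.1 = 0 ∧ B s.2 s.2 = 0 ∧ B s.1 s.2 = 0 ∧ B (T s.1) s.2 = 0).card : ℤ)
      ≤ ∑ p ∈ Sg, if p ∈ Eig then q * x ^ 2 - q else x ^ 2 + q * x - x - q := by
    refine le_trans ?_ (Finset.sum_le_sum hfib)
    rw [← Nat.cast_sum]
    refine Nat.cast_le.mpr ?_
    rw [← Finset.card_sigma]
    refine Finset.card_le_card_of_injOn (fun s => ⟨s.1, s.2⟩) ?_ ?_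
    · intro s hs
      simp only [Finset.coe_filter, Finset.mem_univ, true_and, Set.mem_ofPred_eq] at hs
      simp only [Finset.coe_sigma, Set.mem_sigma_iff, Finset.mem_coe, Finset.mem_filter,
        Finset.mem_univ, true_and, hSg]
      exact ⟨⟨hs.1.ne_zero 0, hs.2.1⟩, hs⟩
    · rintro ⟨a, b⟩ _ ⟨c, d⟩ _ h
      simp only [Sigma.mk.injEq, heq_eq_eq] at h
      simp [h.1, h.2]
  refine hsum.trans_lt ?_
  rw [Finset.sum_ite, Finset.sum_const, Finset.sum_const, nsmul_eq_mul, nsmul_eq_mul]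
  have hsplit := Finset.card_filter_add_card_filter_not (s := Sg) (fun p => p ∈ Eig)
  have hle : (Sg.filter fun p => p ∈ Eig).card ≤ Eig.card :=
    Finset.card_le_card fun p hp => (Finset.mem_filter.mp hp).2
  zify at hsplit hle
  rw [hSgcard] at hsplit
  set a : ℤ := ((Sg.filter fun p => p ∈ Eig).card : ℤ)
  have hb : ((Sg.filter fun p => ¬ p ∈ Eig).card : ℤ) = q ^ 2 * x ^ 2 - 1 - a := by linarith
  rw [hb]
  have ha : 0 < x ^ 2 - 1 - a := by linarith
  -- difference of the two fibre bounds
  have hd2 : 0 < (q * x ^ 2 - q) - (x ^ 2 + q * x - x - q) := by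
    have : (q * x ^ 2 - q) - (x ^ 2 + q * x - x - q) = (q - 1) * x * (x - 1) := by ring
    rw [this]
    exact mul_pos (mul_pos (by linarith) (by linarith)) (by linarith)
  nlinarith [mul_pos ha hd2]

end SkewMaps

/-! ### Even rank, and planes versus ordered bases -/

section Matrices

variable {F : Type} [Field F]

/-- Over a field of characteristic not two, skew-symmetric matrices have even rank: the form is
nondegenerate on a complement of the kernel, and a skew-symmetric matrix of odd size is singular. -/
lemma even_rank_of_skew (h2 : (2 : F) ≠ 0) {ι : Type} [Fintype ι] [DecidableEq ι]
    (S : Matrix ι ι F) (hS : Sᵀ = -S) : Even S.rank := by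
  obtain ⟨W, hW⟩ := (LinearMap.ker S.mulVecLin).exists_isCompl
  have hskew : ∀ x y : ι → F, x ⬝ᵥ S *ᵥ y = -(y ⬝ᵥ S *ᵥ x) := by
    intro x y
    rw [dotProduct_mulVec, ← mulVec_transpose, hS, neg_mulVec, neg_dotProduct, dotProduct_comm]
  have hr : S.rank = Module.finrank F W := by
    have h1 := LinearMap.finrank_range_add_finrank_ker S.mulVecLin
    have h3 := Submodule.finrank_add_eq_of_isCompl hW
    rw [Matrix.rank]
    omega
  let b := Module.finBasis F W
  let A : Matrix (Fin (Module.finrank F W)) (Fin (Module.finrank F W)) F :=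
    Matrix.of fun i j => (b i : ι → F) ⬝ᵥ S *ᵥ (b j : ι → F)
  have hA : Aᵀ = -A := by
    ext i j
    simp only [A, transpose_apply, of_apply]
    exact hskew _ _
  have hdet : A.det ≠ 0 := by
    intro h0
    obtain ⟨x, hx0, hx⟩ := Matrix.exists_mulVec_eq_zero_iff.mpr h0
    set y : W := ∑ j, x j • b j with hy
    have hyc : (y : ι → F) = ∑ j, x j • (b j : ι → F) := by simp [hy]
    have hby : ∀ i, (b i : ι → F) ⬝ᵥ S *ᵥ (y : ι → F) = 0 := by
      intro i
      have h := congrFun hx i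
      rw [hyc, mulVec_sum, dotProduct_sum]
      simp only [mulVec, dotProduct, A, of_apply, Pi.zero_apply] at h
      simp only [mulVec_smul, dotProduct_smul, smul_eq_mul]
      rw [← h]
      exact Finset.sum_congr rfl fun j _ => mul_comm _ _
    have hWy : ∀ w ∈ W, w ⬝ᵥ S *ᵥ (y : ι → F) = 0 := by
      intro w hw
      have hw' : w = ∑ i, b.repr ⟨w, hw⟩ i • (b i : ι → F) := by
        have h := congrArg W.subtype (b.sum_repr ⟨w, hw⟩)
        rw [map_sum] at h
        exact h.symm
      rw [hw', sum_dotProduct]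
      exact Finset.sum_eq_zero fun i _ => by rw [smul_dotProduct, hby, smul_zero]
    have hall : ∀ v : ι → F, v ⬝ᵥ S *ᵥ (y : ι → F) = 0 := by
      intro v
      have hv : v ∈ LinearMap.ker S.mulVecLin ⊔ W := by rw [hW.sup_eq_top]; trivial
      obtain ⟨k, hk, w, hw, rfl⟩ := Submodule.mem_sup.mp hv
      have hk' : S *ᵥ k = 0 := by simpa using hk
      rw [add_dotProduct, hWy w hw, hskew, hk', dotProduct_zero, neg_zero, add_zero]
    have hSy : S *ᵥ (y : ι → F) = 0 := dotProduct_eq_zero _ fun v => by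
      rw [dotProduct_comm]; exact hall v
    have hy0 : (y : ι → F) = 0 := by
      have : (y : ι → F) ∈ LinearMap.ker S.mulVecLin ⊓ W :=
        ⟨by simpa using hSy, y.2⟩
      rwa [hW.inf_eq_bot, Submodule.mem_bot] at this
    have hy1 : ∑ j, x j • b j = 0 := Subtype.ext hy0
    exact hx0 (funext fun j => Fintype.linearIndependent_iff.mp b.linearIndependent x hy1 j)
  rw [hr]
  by_contra hodd
  rw [Nat.not_even_iff_odd] at hodd
  have h := congrArg Matrix.det hA
  rw [det_transpose, det_neg, Fintype.card_fin, hodd.neg_one_pow] at h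
  have h3 : 2 * A.det = 0 := by linear_combination h
  exact hdet ((mul_eq_zero.mp h3).resolve_left h2)

open Classical in
/-- Each plane satisfying `P` contributes its `(q² - 1)(q² - q)` ordered bases to the pairs
satisfying `R`. -/
lemma card_planes_mul_le [Fintype F] {V : Type} [AddCommGroup V] [Module F V] [Fintype V]
    (P : Submodule F V → Prop) (R : V × V → Prop)
    (hPR : ∀ W, P W → ∀ u ∈ W, ∀ v ∈ W, LinearIndependent F ![u, v] → R (u, v)) :
    Nat.card {W : Submodule F V // Module.finrank F W = 2 ∧ P W}
      * ((Fintype.card F ^ 2 - 1) * (Fintype.card F ^ 2 - Fintype.card F))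
      ≤ (Finset.univ.filter R).card := by
  have : FiniteDimensional F V := Module.Finite.of_finite
  let X := {W : Submodule F V // Module.finrank F W = 2 ∧ P W}
  have hcard : Nat.card (Σ W : X, {s : Fin 2 → W.1 // LinearIndependent F s})
      = Nat.card X * ((Fintype.card F ^ 2 - 1) * (Fintype.card F ^ 2 - Fintype.card F)) := by
    have : Fintype X := Fintype.ofFinite X
    rw [Nat.card_sigma]
    have h : ∀ W : X, Nat.card {s : Fin 2 → W.1 // LinearIndependent F s}
        = (Fintype.card F ^ 2 - 1) * (Fintype.card F ^ 2 - Fintype.card F) := by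
      intro W
      rw [card_linearIndependent (by rw [W.2.1])]
      simp [Fin.prod_univ_two, W.2.1]
    simp only [h, Finset.sum_const, Finset.card_univ, smul_eq_mul, Nat.card_eq_fintype_card]
  rw [← hcard, ← Fintype.card_subtype, ← Nat.card_eq_fintype_card]
  have hli : ∀ a : (Σ W : X, {s : Fin 2 → W.1 // LinearIndependent F s}),
      LinearIndependent F (fun i => (a.2.1 i : V)) := fun a =>
    a.2.2.map' a.1.1.subtype (Submodule.ker_subtype _)
  have hspan : ∀ a : (Σ W : X, {s : Fin 2 → W.1 // LinearIndependent F s}),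
      Submodule.span F (Set.range fun i => (a.2.1 i : V)) = a.1.1 := by
    intro a
    refine Submodule.eq_of_le_of_finrank_eq (Submodule.span_le.mpr ?_) ?_
    · rintro _ ⟨i, rfl⟩
      exact (a.2.1 i).2
    · rw [finrank_span_eq_card (hli a), a.1.2.1, Fintype.card_fin]
  refine Nat.card_le_card_of_injective
    (fun a => ⟨((a.2.1 0 : V), (a.2.1 1 : V)), hPR a.1.1 a.1.2.2 _ (a.2.1 0).2 _ (a.2.1 1).2 ?_⟩) ?_
  · convert hli a using 1
    ext i; fin_cases i <;> rfl
  · intro a a' h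
    simp only [Subtype.mk.injEq, Prod.mk.injEq] at h
    have hfun : (fun i => (a.2.1 i : V)) = fun i => (a'.2.1 i : V) := by
      ext i; fin_cases i
      · exact h.1
      · exact h.2
    have hW : a.1 = a'.1 := Subtype.ext (by rw [← hspan a, ← hspan a', hfun])
    obtain ⟨W, s, hs⟩ := a
    obtain ⟨W', s', hs'⟩ := a'
    obtain rfl : W = W' := hW
    congr 2
    ext i
    exact congrFun hfun i

end Matrices

/-- For `n ≥ 3`, if a nonzero antisymmetric matrix `S` attains the maximum
number `f_max(n,q)` of 2-dimensional subspaces totally singular for `M` and totally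
isotropic for `S` (stated multiplied through by the positive denominator
`(q−1)²(q+1)`), then `S` has rank 2, equivalently the radical `ker S` of the alternating
form has dimension `2n − 1`. -/
theorem stmt_19 (q : ℕ) (F : Type) [Field F] [Fintype F]
    (hcard : Fintype.card F = q) (hodd : Odd q)
    (n : ℕ) (hn : 3 ≤ n)
    (M : Matrix (Fin (2 * n + 1)) (Fin (2 * n + 1)) F)
    (hMsymm : M.IsSymm) (hMinv : IsUnit M)
    (S : Matrix (Fin (2 * n + 1)) (Fin (2 * n + 1)) F)
    (hS0 : S ≠ 0) (hSanti : Sᵀ = -S)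
    (hmax : (Nat.card {W : Submodule F (Fin (2 * n + 1) → F) //
        Module.finrank F W = 2 ∧
        (∀ v ∈ W, v ⬝ᵥ M.mulVec v = 0) ∧
        (∀ u ∈ W, ∀ v ∈ W, u ⬝ᵥ S.mulVec v = 0)} : ℤ) *
      (((q : ℤ) - 1) ^ 2 * ((q : ℤ) + 1)) =
    ((q : ℤ) ^ (n - 1) - 1) *
      ((q : ℤ) ^ (3 * n - 2) + (q : ℤ) ^ (3 * n - 3) - (q : ℤ) ^ (3 * n - 4)
        + (q : ℤ) ^ (2 * n) - (q : ℤ) ^ (n - 1) - 1)) :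
    S.rank = 2 ∧
      Module.finrank F (LinearMap.ker (Matrix.mulVecLin S)) = 2 * n - 1 := by
  classical
  have hodd' : Odd (Fintype.card F) := hcard ▸ hodd
  have h2 := two_ne_zero_of_odd hodd'
  have heven := even_rank_of_skew h2 S hSanti
  have hrn : S.rank + Module.finrank F (LinearMap.ker S.mulVecLin) = 2 * n + 1 := by
    have := LinearMap.finrank_range_add_finrank_ker S.mulVecLin
    rwa [Module.finrank_fin_fun] at this
  have hr0 : S.rank ≠ 0 := by
    intro h
    rw [Matrix.rank, Submodule.finrank_eq_zero, LinearMap.range_eq_bot] at h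
    refine hS0 (Matrix.ext_of_mulVec_single fun i => ?_)
    have h' := LinearMap.congr_fun h (Pi.single i 1)
    simpa [Matrix.col, funext_iff] using h'
  suffices hr : S.rank = 2 from ⟨hr, by omega⟩
  by_contra hr2
  have hker : Module.finrank F (LinearMap.ker S.mulVecLin) ≤ 2 * n - 3 := by
    obtain ⟨k, hk⟩ := heven
    omega
  have hMdet : IsUnit M.det := (Matrix.isUnit_iff_isUnit_det M).mp hMinv
  let B : LinearMap.BilinForm F (Fin (2 * n + 1) → F) := Matrix.toBilin' M
  have hBapp : ∀ u v, B u v = u ⬝ᵥ M *ᵥ v := fun u v => Matrix.toBilin'_apply' M u v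
  have hMs : ∀ u v : Fin (2 * n + 1) → F, u ⬝ᵥ M *ᵥ v = v ⬝ᵥ M *ᵥ u := by
    intro u v
    rw [dotProduct_mulVec, ← mulVec_transpose, hMsymm.eq, dotProduct_comm]
  have hSs : ∀ u v : Fin (2 * n + 1) → F, u ⬝ᵥ S *ᵥ v = -(v ⬝ᵥ S *ᵥ u) := by
    intro u v
    rw [dotProduct_mulVec, ← mulVec_transpose, hSanti, neg_mulVec, neg_dotProduct, dotProduct_comm]
  have hsymm : LinearMap.IsSymm B := ⟨fun u v => by
    simp only [RingHom.id_apply, hBapp]; exact hMs u v⟩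
  have hB : B.Nondegenerate :=
    Matrix.Nondegenerate.toBilin' (Matrix.nondegenerate_of_det_ne_zero hMdet.ne_zero)
  -- `T = M⁻¹ S`, so that `B x (T y) = xᵀ S y`
  let T : (Fin (2 * n + 1) → F) →ₗ[F] (Fin (2 * n + 1) → F) := (M⁻¹ * S).mulVecLin
  have hMT : ∀ y, M *ᵥ T y = S *ᵥ y := by
    intro y
    simp only [T, mulVecLin_apply, mulVec_mulVec]
    rw [← Matrix.mul_assoc, Matrix.mul_nonsing_inv _ hMdet, Matrix.one_mul]
  have hBT : ∀ x y, B x (T y) = x ⬝ᵥ S *ᵥ y := fun x y => by rw [hBapp, hMT]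
  have hBT' : ∀ x y, B (T x) y = y ⬝ᵥ S *ᵥ x := fun x y => by rw [hBapp, hMs, hMT]
  have hT : ∀ x y, B (T x) y = -B x (T y) := fun x y => by rw [hBT', hBT, hSs]
  have hkerT : Module.finrank F (LinearMap.ker T) ≤ 2 * n - 3 := by
    refine (Submodule.finrank_mono ?_).trans hker
    intro y hy
    have hy' : T y = 0 := hy
    rw [LinearMap.mem_ker, mulVecLin_apply, ← hMT, hy', mulVec_zero]
  have hlt := card_pairs_lt hodd' B hsymm hB hn (Module.finrank_fin_fun F) T hT hkerT
    (q : ℤ) ((q : ℤ) ^ (n - 1)) (by rw [hcard]) rfl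
  have hle := card_planes_mul_le (F := F) (V := Fin (2 * n + 1) → F)
    (fun W => (∀ v ∈ W, v ⬝ᵥ M.mulVec v = 0) ∧ (∀ u ∈ W, ∀ v ∈ W, u ⬝ᵥ S.mulVec v = 0))
    (fun s => LinearIndependent F ![s.1, s.2] ∧ B s.1 s.1 = 0 ∧
      B s.2 s.2 = 0 ∧ B s.1 s.2 = 0 ∧ B (T s.1) s.2 = 0) (by
      rintro W ⟨hW1, hW2⟩ u hu v hv hli
      refine ⟨hli, (hBapp u u).trans (hW1 u hu), (hBapp v v).trans (hW1 v hv), ?_, ?_⟩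
      · -- polarization
        have h := hW1 (u + v) (W.add_mem hu hv)
        rw [mulVec_add, dotProduct_add, add_dotProduct, add_dotProduct, hW1 u hu, hW1 v hv,
          hMs v u] at h
        have h3 : 2 * (u ⬝ᵥ M *ᵥ v) = 0 := by linear_combination h
        exact (hBapp u v).trans ((mul_eq_zero.mp h3).resolve_left h2)
      · exact (hBT' u v).trans (hW2 v hv u hu))
  rw [hcard] at hle
  set N := Nat.card {W : Submodule F (Fin (2 * n + 1) → F) //
        Module.finrank F W = 2 ∧
        (∀ v ∈ W, v ⬝ᵥ M.mulVec v = 0) ∧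
        (∀ u ∈ W, ∀ v ∈ W, u ⬝ᵥ S.mulVec v = 0)}
  have hq1 : 1 ≤ q := hcard ▸ Fintype.card_pos
  have hle' := (Nat.cast_le (α := ℤ)).mpr hle
  rw [Nat.cast_mul, Nat.cast_mul, Nat.cast_sub (Nat.one_le_pow _ _ hq1),
    Nat.cast_sub (by nlinarith), Nat.cast_pow, Nat.cast_one] at hle'
  have hfin : (N : ℤ) * (((q : ℤ) ^ 2 - 1) * ((q : ℤ) ^ 2 - q))
      < (((q : ℤ) ^ (n - 1)) ^ 2 - 1) * (q * ((q : ℤ) ^ (n - 1)) ^ 2 - q)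
        + ((q : ℤ) ^ 2 * ((q : ℤ) ^ (n - 1)) ^ 2 - ((q : ℤ) ^ (n - 1)) ^ 2)
          * (((q : ℤ) ^ (n - 1)) ^ 2 + q * (q : ℤ) ^ (n - 1) - (q : ℤ) ^ (n - 1) - q) := by
    refine lt_of_le_of_lt hle' ?_
    convert hlt <;> rfl
  obtain ⟨m, rfl⟩ : ∃ m, n = m + 2 := ⟨n - 2, by omega⟩
  rw [show m + 2 - 1 = m + 1 by omega] at hmax hfin
  rw [show 3 * (m + 2) - 2 = 3 * m + 4 by omega, show 3 * (m + 2) - 3 = 3 * m + 3 by omega,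
    show 3 * (m + 2) - 4 = 3 * m + 2 by omega] at hmax
  refine absurd ?_ hfin.ne
  -- with `x = q ^ (n - 1)`, the bound is `q` times the right-hand side of `hmax`
  linear_combination (q : ℤ) * hmax
end
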